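/- arXiv:2204.05014 — 4 statements merged into one kernel-verified Lean document; each statement's English description precedes it below -/
import Mathlib

section
/- Let S(16) denote the set of all integer circulant determinants of order 16. Then S(16) equals the union of: the set of odd integers; the set 128ℤ; the set of all integers 64pm where m ∈ ℤ and p is a prime such that p ≡ 1 (mod 8) and p = a² + b² for some integers a, b with a + b ≡ 3 or 5 (mod 8); the set of all integers 64pm where m ∈ ℤ and p is a prime with p ≡ 5 (mod 8); and the set of all integers 64p²m where m ∈ ℤ and p is a prime with p ≡ 3 (mod 8). -/
open Complex Finset

noncomputable def zeta16 : ℂ := Complex.exp (2 * Real.pi * Complex.I / 16)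

noncomputable def fpoly (a : Fin 16 → ℤ) (x : ℂ) : ℂ := ∑ k : Fin 16, (a k : ℂ) * x ^ (k : ℕ)

noncomputable def Nprod (a : Fin 16 → ℤ) (d : ℕ) : ℂ :=
  ∏ l ∈ Finset.filter (fun l => Nat.gcd l 16 = d) (Finset.range 16), fpoly a (zeta16 ^ l)

def circMatrix (a : Fin 16 → ℤ) : Matrix (Fin 16) (Fin 16) ℤ := fun i j => a (i - j)

def S16 : Set ℤ := { n | ∃ a : Fin 16 → ℤ, n = (circMatrix a).det }

def bcoef (a : Fin 16 → ℤ) (k : Fin 16) : ℤ := (a k + a (k + 8)) + (a (k + 4) + a (k + 12))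
def ccoef (a : Fin 16 → ℤ) (k : Fin 16) : ℤ := (a k + a (k + 8)) - (a (k + 4) + a (k + 12))
def ecoef (a : Fin 16 → ℤ) (k : Fin 16) : ℤ := a k - a (k + 8)



/-! ### The determinant formula -/

def fS (c0 c1 c2 c3 : ℤ) : ℤ := c0 ^ 2 - c2 ^ 2 + 2 * c1 * c3
def fT (c0 c1 c2 c3 : ℤ) : ℤ := 2 * c0 * c2 - c1 ^ 2 + c3 ^ 2
/-- norm form of the eighth cyclotomic ring -/
def N8 (c0 c1 c2 c3 : ℤ) : ℤ := fS c0 c1 c2 c3 ^ 2 + fT c0 c1 c2 c3 ^ 2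
def D4 (b0 b1 b2 b3 : ℤ) : ℤ :=
  ((b0 + b2) ^ 2 - (b1 + b3) ^ 2) * ((b0 - b2) ^ 2 + (b1 - b3) ^ 2)
def fPr (e0 e1 e2 e3 e4 e5 e6 e7 : ℤ) : ℤ :=
  e0 ^ 2 - e4 ^ 2 - 2 * e2 * e6 + 2 * (e1 * e7 + e5 * e3)
def fPi (e0 e1 e2 e3 e4 e5 e6 e7 : ℤ) : ℤ :=
  2 * e0 * e4 + e2 ^ 2 - e6 ^ 2 - 2 * (e1 * e3 - e5 * e7)
def fQr (e0 e1 e2 e3 e4 e5 e6 e7 : ℤ) : ℤ :=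
  2 * (e0 * e2 - e4 * e6) - e1 ^ 2 + e5 ^ 2 + 2 * e3 * e7
def fQi (e0 e1 e2 e3 e4 e5 e6 e7 : ℤ) : ℤ :=
  2 * (e0 * e6 + e4 * e2) - 2 * e1 * e5 - e3 ^ 2 + e7 ^ 2
def N16 (e0 e1 e2 e3 e4 e5 e6 e7 : ℤ) : ℤ :=
  N8 (fPr e0 e1 e2 e3 e4 e5 e6 e7) (fQr e0 e1 e2 e3 e4 e5 e6 e7)
    (fPi e0 e1 e2 e3 e4 e5 e6 e7) (fQi e0 e1 e2 e3 e4 e5 e6 e7)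

def detF (a0 a1 a2 a3 a4 a5 a6 a7 a8 a9 a10 a11 a12 a13 a14 a15 : ℤ) : ℤ :=
  D4 (a0 + a8 + (a4 + a12)) (a1 + a9 + (a5 + a13)) (a2 + a10 + (a6 + a14)) (a3 + a11 + (a7 + a15)) *
  N8 (a0 + a8 - (a4 + a12)) (a1 + a9 - (a5 + a13)) (a2 + a10 - (a6 + a14)) (a3 + a11 - (a7 + a15)) *
  N16 (a0 - a8) (a1 - a9) (a2 - a10) (a3 - a11) (a4 - a12) (a5 - a13) (a6 - a14) (a7 - a15)

theorem zeta_prim : IsPrimitiveRoot zeta16 16 := by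
  have := Complex.isPrimitiveRoot_exp 16 (by norm_num)
  simpa [zeta16] using this

theorem det_prod (a : Fin 16 → ℤ) :
    (((circMatrix a).det : ℤ) : ℂ) = ∏ i : Fin 16, fpoly a (zeta16 ^ (i : ℕ)) := by
  set v : Fin 16 → ℂ := fun i => zeta16 ^ (i : ℕ) with hv
  have hinj : Function.Injective v := by
    intro i j h
    exact Fin.ext (zeta_prim.pow_inj i.2 j.2 h)
  have hV : (Matrix.vandermonde v).det ≠ 0 := Matrix.det_vandermonde_ne_zero_iff.2 hinj
  have hv16 : ∀ i, v i ^ 16 = 1 := by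
    intro i
    simp only [hv]
    rw [← pow_mul, mul_comm, pow_mul, zeta_prim.pow_eq_one, one_pow]
  have key : Matrix.vandermonde v * (circMatrix a).map (Int.cast : ℤ → ℂ)
      = Matrix.diagonal (fun i => fpoly a (v i)) * Matrix.vandermonde v := by
    ext i j
    rw [Matrix.diagonal_mul, Matrix.mul_apply]
    simp only [Matrix.vandermonde_apply, Matrix.map_apply, circMatrix, fpoly]
    rw [Finset.sum_mul, ← Equiv.sum_comp (Equiv.addRight j)]
    apply Finset.sum_congr rfl
    intro k _
    simp only [Equiv.coe_addRight, add_sub_cancel_right]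
    have : v i ^ ((k + j : Fin 16) : ℕ) = v i ^ (k : ℕ) * v i ^ (j : ℕ) := by
      rw [← pow_add, Fin.val_add, ← pow_eq_pow_mod _ (hv16 i)]
    rw [this]; ring
  have h2 := congrArg Matrix.det key
  rw [Matrix.det_mul, Matrix.det_mul, Matrix.det_diagonal, mul_comm] at h2
  have h3 := mul_right_cancel₀ hV h2
  rw [← h3]
  exact Int.cast_det _

theorem det_formula (a : Fin 16 → ℤ) : (circMatrix a).det =
    detF (a 0) (a 1) (a 2) (a 3) (a 4) (a 5) (a 6) (a 7)
      (a 8) (a 9) (a 10) (a 11) (a 12) (a 13) (a 14) (a 15) := by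
  have hw16 := zeta_prim.pow_eq_one
  have hw8 : zeta16 ^ 8 = -1 := by
    have h : (zeta16 ^ 8 - 1) * (zeta16 ^ 8 + 1) = 0 := by linear_combination hw16
    rcases mul_eq_zero.1 h with h | h
    · exact absurd (sub_eq_zero.1 h) (zeta_prim.pow_ne_one_of_pos_of_lt (by norm_num) (by norm_num))
    · linear_combination h
  have hF : ∀ x, fpoly a x = (a 0 : ℂ) + a 1 * x + a 2 * x ^ 2 + a 3 * x ^ 3 + a 4 * x ^ 4
      + a 5 * x ^ 5 + a 6 * x ^ 6 + a 7 * x ^ 7 + a 8 * x ^ 8 + a 9 * x ^ 9 + a 10 * x ^ 10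
      + a 11 * x ^ 11 + a 12 * x ^ 12 + a 13 * x ^ 13 + a 14 * x ^ 14 + a 15 * x ^ 15 := by
    intro x
    simp only [fpoly, Fin.sum_univ_succ, Fin.sum_univ_zero]
    simp [Fin.succ]
    ring
  generalize a 0 = a0, a 1 = a1, a 2 = a2, a 3 = a3, a 4 = a4, a 5 = a5, a 6 = a6, a 7 = a7,
    a 8 = a8, a 9 = a9, a 10 = a10, a 11 = a11, a 12 = a12, a 13 = a13, a 14 = a14,
    a 15 = a15 at hF ⊢
  have h16 : ∀ x : ℂ, x ^ 8 = -1 →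
      fpoly a x * fpoly a (-x) * (fpoly a (x ^ 5) * fpoly a (-x ^ 5)) =
      (fS (fPr (a0 - a8) (a1 - a9) (a2 - a10) (a3 - a11) (a4 - a12) (a5 - a13) (a6 - a14) (a7 - a15))
        (fQr (a0 - a8) (a1 - a9) (a2 - a10) (a3 - a11) (a4 - a12) (a5 - a13) (a6 - a14) (a7 - a15))
        (fPi (a0 - a8) (a1 - a9) (a2 - a10) (a3 - a11) (a4 - a12) (a5 - a13) (a6 - a14) (a7 - a15))
        (fQi (a0 - a8) (a1 - a9) (a2 - a10) (a3 - a11) (a4 - a12) (a5 - a13) (a6 - a14) (a7 - a15)) : ℂ)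
      + (fT (fPr (a0 - a8) (a1 - a9) (a2 - a10) (a3 - a11) (a4 - a12) (a5 - a13) (a6 - a14) (a7 - a15))
        (fQr (a0 - a8) (a1 - a9) (a2 - a10) (a3 - a11) (a4 - a12) (a5 - a13) (a6 - a14) (a7 - a15))
        (fPi (a0 - a8) (a1 - a9) (a2 - a10) (a3 - a11) (a4 - a12) (a5 - a13) (a6 - a14) (a7 - a15))
        (fQi (a0 - a8) (a1 - a9) (a2 - a10) (a3 - a11) (a4 - a12) (a5 - a13) (a6 - a14) (a7 - a15)) : ℂ)
        * x ^ 4 := by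
    have hred : ∀ x : ℂ, x ^ 8 = -1 → fpoly a x =
        ((a0 - a8 : ℤ) : ℂ) + (a1 - a9 : ℤ) * x + (a2 - a10 : ℤ) * x ^ 2 + (a3 - a11 : ℤ) * x ^ 3
        + (a4 - a12 : ℤ) * x ^ 4 + (a5 - a13 : ℤ) * x ^ 5 + (a6 - a14 : ℤ) * x ^ 6
        + (a7 - a15 : ℤ) * x ^ 7 := by
      intro x hx
      rw [hF]
      push_cast
      linear_combination ((a8 : ℂ) + a9 * x + a10 * x ^ 2 + a11 * x ^ 3 + a12 * x ^ 4 + a13 * x ^ 5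
        + a14 * x ^ 6 + a15 * x ^ 7) * hx
    generalize a0 - a8 = e0, a1 - a9 = e1, a2 - a10 = e2, a3 - a11 = e3, a4 - a12 = e4,
      a5 - a13 = e5, a6 - a14 = e6, a7 - a15 = e7 at hred ⊢
    have hpair : ∀ x : ℂ, x ^ 8 = -1 → fpoly a x * fpoly a (-x) =
        ((fPr e0 e1 e2 e3 e4 e5 e6 e7 : ℂ) + fPi e0 e1 e2 e3 e4 e5 e6 e7 * x ^ 4)
        + x ^ 2 * ((fQr e0 e1 e2 e3 e4 e5 e6 e7 : ℂ) + fQi e0 e1 e2 e3 e4 e5 e6 e7 * x ^ 4) := by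
      intro x hx
      have hx' : (-x) ^ 8 = -1 := by rw [← hx]; ring
      have h1 : fpoly a x = ((e0 + e4 * x ^ 4) + (e2 + e6 * x ^ 4) * x ^ 2)
        + x * ((e1 + e5 * x ^ 4) + (e3 + e7 * x ^ 4) * x ^ 2) := by
        rw [hred x hx]; ring
      have h2 : fpoly a (-x) = ((e0 + e4 * x ^ 4) + (e2 + e6 * x ^ 4) * x ^ 2)
        - x * ((e1 + e5 * x ^ 4) + (e3 + e7 * x ^ 4) * x ^ 2) := by
        rw [hred (-x) hx']; ring
      rw [h1, h2]
      simp only [fPr, fPi, fQr, fQi]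
      push_cast
      linear_combination ((e4 : ℂ) ^ 2 + e6 ^ 2 * x ^ 4 + 2 * e2 * e6 + 2 * e4 * e6 * x ^ 2
        - e5 ^ 2 * x ^ 2 - e7 ^ 2 * x ^ 6 - 2 * e3 * e7 * x ^ 2 - 2 * e1 * e7 - 2 * e5 * e3
        - 2 * e5 * e7 * x ^ 4) * hx
    intro x hx
    have hx5 : (x ^ 5) ^ 8 = -1 := by
      have : (x ^ 5) ^ 8 = (x ^ 8) ^ 5 := by ring
      rw [this, hx]; norm_num
    have e4' : (x ^ 5) ^ 4 = x ^ 4 := by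
      have : (x ^ 5) ^ 4 = (x ^ 8) ^ 2 * x ^ 4 := by ring
      rw [this, hx]; norm_num
    have e2' : (x ^ 5) ^ 2 = -x ^ 2 := by
      have : (x ^ 5) ^ 2 = (x ^ 8) * x ^ 2 := by ring
      rw [this, hx]; norm_num
    rw [hpair x hx, hpair _ hx5, e4', e2']
    generalize fPr e0 e1 e2 e3 e4 e5 e6 e7 = p, fPi e0 e1 e2 e3 e4 e5 e6 e7 = q,
      fQr e0 e1 e2 e3 e4 e5 e6 e7 = r, fQi e0 e1 e2 e3 e4 e5 e6 e7 = s
    simp only [fS, fT]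
    push_cast
    linear_combination ((q : ℂ) ^ 2 - 2 * r * s - s ^ 2 * x ^ 4) * hx
  have h8 : ∀ x : ℂ, x ^ 4 = -1 → fpoly a x * fpoly a (-x) =
      (fS (a0 + a8 - (a4 + a12)) (a1 + a9 - (a5 + a13)) (a2 + a10 - (a6 + a14))
        (a3 + a11 - (a7 + a15)) : ℂ)
      + (fT (a0 + a8 - (a4 + a12)) (a1 + a9 - (a5 + a13)) (a2 + a10 - (a6 + a14))
        (a3 + a11 - (a7 + a15)) : ℂ) * x ^ 2 := by
    have hred : ∀ x : ℂ, x ^ 4 = -1 → fpoly a x =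
        ((a0 + a8 - (a4 + a12) : ℤ) : ℂ) + (a1 + a9 - (a5 + a13) : ℤ) * x
        + (a2 + a10 - (a6 + a14) : ℤ) * x ^ 2 + (a3 + a11 - (a7 + a15) : ℤ) * x ^ 3 := by
      intro x hx
      rw [hF]
      push_cast
      linear_combination ((a4 : ℂ) + a5 * x + a6 * x ^ 2 + a7 * x ^ 3
        + (a8 + a9 * x + a10 * x ^ 2 + a11 * x ^ 3) * (x ^ 4 - 1)
        + (a12 + a13 * x + a14 * x ^ 2 + a15 * x ^ 3) * (x ^ 8 - x ^ 4 + 1)) * hx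
    generalize a0 + a8 - (a4 + a12) = c0, a1 + a9 - (a5 + a13) = c1,
      a2 + a10 - (a6 + a14) = c2, a3 + a11 - (a7 + a15) = c3 at hred ⊢
    intro x hx
    have hx' : (-x) ^ 4 = -1 := by rw [← hx]; ring
    rw [hred x hx, hred (-x) hx']
    simp only [fS, fT]
    push_cast
    linear_combination ((c2 : ℂ) ^ 2 - 2 * c1 * c3 - c3 ^ 2 * x ^ 2) * hx
  have h4 : ∀ x : ℂ, x ^ 2 = -1 → fpoly a x * fpoly a (-x) =
      (((a0 + a8 + (a4 + a12)) - (a2 + a10 + (a6 + a14)) : ℤ) : ℂ) ^ 2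
      + (((a1 + a9 + (a5 + a13)) - (a3 + a11 + (a7 + a15)) : ℤ) : ℂ) ^ 2 := by
    have hred : ∀ x : ℂ, x ^ 2 = -1 → fpoly a x =
        (((a0 + a8 + (a4 + a12)) - (a2 + a10 + (a6 + a14)) : ℤ) : ℂ)
        + (((a1 + a9 + (a5 + a13)) - (a3 + a11 + (a7 + a15)) : ℤ) : ℂ) * x := by
      intro x hx
      have e3 : x ^ 3 = -x := by rw [pow_succ, hx]; ring
      have e4 : x ^ 4 = 1 := by rw [show x ^ 4 = (x ^ 2) ^ 2 by ring, hx]; ring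
      have e5 : x ^ 5 = x := by rw [pow_succ, e4]; ring
      have e6 : x ^ 6 = -1 := by rw [show x ^ 6 = x ^ 4 * x ^ 2 by ring, hx, e4]; ring
      have e7 : x ^ 7 = -x := by rw [show x ^ 7 = x ^ 4 * x ^ 3 by ring, e3, e4]; ring
      have e8 : x ^ 8 = 1 := by rw [show x ^ 8 = x ^ 4 * x ^ 4 by ring, e4]; ring
      have e9 : x ^ 9 = x := by rw [show x ^ 9 = x ^ 8 * x by ring, e8]; ring
      have e10 : x ^ 10 = -1 := by rw [show x ^ 10 = x ^ 8 * x ^ 2 by ring, e8, hx]; ring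
      have e11 : x ^ 11 = -x := by rw [show x ^ 11 = x ^ 8 * x ^ 3 by ring, e8, e3]; ring
      have e12 : x ^ 12 = 1 := by rw [show x ^ 12 = x ^ 8 * x ^ 4 by ring, e8, e4]; ring
      have e13 : x ^ 13 = x := by rw [show x ^ 13 = x ^ 8 * x ^ 5 by ring, e8, e5]; ring
      have e14 : x ^ 14 = -1 := by rw [show x ^ 14 = x ^ 8 * x ^ 6 by ring, e8, e6]; ring
      have e15 : x ^ 15 = -x := by rw [show x ^ 15 = x ^ 8 * x ^ 7 by ring, e8, e7]; ring
      rw [hF, hx, e3, e4, e5, e6, e7, e8, e9, e10, e11, e12, e13, e14, e15]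
      push_cast
      ring
    generalize (a0 + a8 + (a4 + a12)) - (a2 + a10 + (a6 + a14)) = c0,
      (a1 + a9 + (a5 + a13)) - (a3 + a11 + (a7 + a15)) = c1 at hred ⊢
    intro x hx
    have hx' : (-x) ^ 2 = -1 := by rw [← hx]; ring
    rw [hred x hx, hred (-x) hx']
    linear_combination (-(c1 : ℂ) ^ 2) * hx
  have hdet := det_prod a
  simp only [Fin.prod_univ_succ, Fin.prod_univ_zero] at hdet
  simp [Fin.succ] at hdet
  have p12 : zeta16 ^ 12 = -zeta16 ^ 4 := by linear_combination zeta16 ^ 4 * hw8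
  have p10 : zeta16 ^ 10 = -zeta16 ^ 2 := by linear_combination zeta16 ^ 2 * hw8
  have p14 : zeta16 ^ 14 = -zeta16 ^ 6 := by linear_combination zeta16 ^ 6 * hw8
  have p9 : zeta16 ^ 9 = -zeta16 := by linear_combination zeta16 * hw8
  have p13 : zeta16 ^ 13 = -zeta16 ^ 5 := by linear_combination zeta16 ^ 5 * hw8
  have p11 : zeta16 ^ 11 = -zeta16 ^ 3 := by linear_combination zeta16 ^ 3 * hw8
  have p15 : zeta16 ^ 15 = (zeta16 ^ 3) ^ 5 := by ring
  have p7 : zeta16 ^ 7 = -(zeta16 ^ 3) ^ 5 := by linear_combination zeta16 ^ 7 * hw8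
  have p6 : (zeta16 ^ 6) ^ 2 = -zeta16 ^ 4 := by linear_combination zeta16 ^ 4 * hw8
  have p3 : (zeta16 ^ 3) ^ 4 = -zeta16 ^ 4 := by linear_combination zeta16 ^ 4 * hw8
  have q1 := h16 zeta16 hw8
  have q2 := h16 (zeta16 ^ 3) (by rw [show (zeta16 ^ 3) ^ 8 = (zeta16 ^ 8) ^ 3 by ring, hw8]; norm_num)
  have q3 := h8 (zeta16 ^ 2) (by rw [← hw8]; ring)
  have q4 := h8 (zeta16 ^ 6) (by rw [show (zeta16 ^ 6) ^ 4 = (zeta16 ^ 8) ^ 3 by ring, hw8]; norm_num)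
  have q5 := h4 (zeta16 ^ 4) (by rw [← hw8]; ring)
  rw [p3] at q2
  rw [p6] at q4
  have q6 : fpoly a 1 * fpoly a (-1) = (((a0 + a8 + (a4 + a12)) + (a2 + a10 + (a6 + a14)) : ℤ) : ℂ) ^ 2
      - (((a1 + a9 + (a5 + a13)) + (a3 + a11 + (a7 + a15)) : ℤ) : ℂ) ^ 2 := by
    rw [hF, hF]; push_cast; ring
  rw [p12, p10, p14, p9, p13, p11, p15, p7, hw8] at hdet
  have hI : (zeta16 ^ 4) ^ 2 = -1 := by rw [← hw8]; ring
  have e22 : (zeta16 ^ 2) ^ 2 = zeta16 ^ 4 := by ring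
  rw [e22] at q3
  have hfin : (((circMatrix a).det : ℤ) : ℂ) =
      (fpoly a 1 * fpoly a (-1)) * (fpoly a (zeta16 ^ 4) * fpoly a (-zeta16 ^ 4)) *
      ((fpoly a (zeta16 ^ 2) * fpoly a (-zeta16 ^ 2)) * (fpoly a (zeta16 ^ 6) * fpoly a (-zeta16 ^ 6))) *
      ((fpoly a zeta16 * fpoly a (-zeta16) * (fpoly a (zeta16 ^ 5) * fpoly a (-zeta16 ^ 5))) *
       (fpoly a (zeta16 ^ 3) * fpoly a (-zeta16 ^ 3) * (fpoly a ((zeta16 ^ 3) ^ 5) * fpoly a (-(zeta16 ^ 3) ^ 5)))) := by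
    rw [hdet]; ring
  rw [q1, q2, q3, q4, q5, q6] at hfin
  have hnorm : ∀ u v : ℤ, ((u : ℂ) + v * zeta16 ^ 4) * (u + v * -zeta16 ^ 4) = ((u ^ 2 + v ^ 2 : ℤ) : ℂ) := by
    intro u v; push_cast
    linear_combination (-(v : ℂ) ^ 2) * hI
  rw [hnorm, hnorm] at hfin
  simp only [detF, N16, D4, N8]
  exact_mod_cast hfin


/-! ### Necessity -/

def GoodDiv (n : ℤ) : Prop :=
  (∃ (p : ℕ) (a b : ℤ), p.Prime ∧ p % 8 = 1 ∧ (p : ℤ) = a ^ 2 + b ^ 2 ∧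
        (a + b ≡ 3 [ZMOD 8] ∨ a + b ≡ 5 [ZMOD 8]) ∧ (p : ℤ) ∣ n) ∨
  (∃ p : ℕ, p.Prime ∧ p % 8 = 5 ∧ (p : ℤ) ∣ n) ∨
  (∃ p : ℕ, p.Prime ∧ p % 8 = 3 ∧ (p : ℤ) ^ 2 ∣ n)

theorem GoodDiv.mono {m n : ℤ} (h : m ∣ n) (hm : GoodDiv m) : GoodDiv n := by
  rcases hm with ⟨p, a, b, h1, h2, h3, h4, h5⟩ | ⟨p, h1, h2, h3⟩ | ⟨p, h1, h2, h3⟩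
  · exact Or.inl ⟨p, a, b, h1, h2, h3, h4, h5.trans h⟩
  · exact Or.inr (Or.inl ⟨p, h1, h2, h3.trans h⟩)
  · exact Or.inr (Or.inr ⟨p, h1, h2, h3.trans h⟩)

/-- the character condition -/
def Chi (u v : ℤ) : Prop := (u * v) % 4 = 0 ∧ ((u + v) % 8 = 1 ∨ (u + v) % 8 = 7)

theorem emod_mul_aux (x y n : ℤ) : (x * y) % n = ((x % n) * (y % n)) % n := Int.mul_emod x y n

theorem Chi.mul {a b s t : ℤ} (h : Chi a b) (k : Chi s t) : Chi (a * s - b * t) (a * t + b * s) := by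
  obtain ⟨h1, h2⟩ := h
  obtain ⟨k1, k2⟩ := k
  have H1 : ∀ a b : ZMod 8, ∀ s t : ZMod 8, 2 * (a * b) = 0 → (a + b = 1 ∨ a + b = 7) →
     2 * (s * t) = 0 → (s + t = 1 ∨ s + t = 7) →
      (2 * ((a * s - b * t) * (a * t + b * s)) = 0 ∧
      ((a * s - b * t) + (a * t + b * s) = 1 ∨ (a * s - b * t) + (a * t + b * s) = 7)) := by
    decide +kernel
  have tr : ∀ x y : ℤ, Chi x y ↔ (2 * ((x : ZMod 8) * y) = 0 ∧ ((x : ZMod 8) + y = 1 ∨ (x : ZMod 8) + y = 7)) := by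
    intro x y
    have e1 : 2 * ((x : ZMod 8) * y) = 0 ↔ (x * y) % 4 = 0 := by
      have : 2 * ((x : ZMod 8) * y) = ((2 * (x * y) : ℤ) : ZMod 8) := by push_cast; ring
      rw [this, ZMod.intCast_zmod_eq_zero_iff_dvd]
      omega
    have e2 : (x : ZMod 8) + y = 1 ↔ (x + y) % 8 = 1 := by
      have : (x : ZMod 8) + y = 1 ↔ ((x + y : ℤ) : ZMod 8) = ((1 : ℤ) : ZMod 8) := by push_cast; rfl
      rw [this, ZMod.intCast_eq_intCast_iff']
      norm_num
    have e3 : (x : ZMod 8) + y = 7 ↔ (x + y) % 8 = 7 := by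
      have : (x : ZMod 8) + y = 7 ↔ ((x + y : ℤ) : ZMod 8) = ((7 : ℤ) : ZMod 8) := by push_cast; rfl
      rw [this, ZMod.intCast_eq_intCast_iff']
      norm_num
    rw [e1, e2, e3, Chi]
  rw [tr]
  have ha := (tr a b).1 ⟨h1, h2⟩
  have hs := (tr s t).1 ⟨k1, k2⟩
  have := H1 a b s t ha.1 ha.2 hs.1 hs.2
  push_cast
  exact this

theorem gauss_div {p : ℕ} (hp : p.Prime) {a b u v : ℤ} (hab : (p : ℤ) = a ^ 2 + b ^ 2)
    (h : (p : ℤ) ∣ u ^ 2 + v ^ 2) :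
    ∃ s t : ℤ, (u = a * s - b * t ∧ v = a * t + b * s) ∨ (u = a * s + b * t ∧ v = a * t - b * s) := by
  have hpz : Prime (p : ℤ) := Nat.prime_iff_prime_int.1 hp
  have hp0 : (p : ℤ) ≠ 0 := hpz.ne_zero
  have h1 : (p : ℤ) ∣ (u * b + v * a) * (u * b - v * a) := by
    obtain ⟨k, hk⟩ := h
    refine ⟨u ^ 2 - a ^ 2 * k, ?_⟩
    linear_combination (-u ^ 2) * hab - a ^ 2 * hk
  have h2 : ∀ b : ℤ, (p : ℤ) = a ^ 2 + b ^ 2 → (p : ℤ) ∣ u * b - v * a → (p : ℤ) ∣ u * a + v * b := by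
    intro b hab hd
    have : (p : ℤ) ∣ (u * a + v * b) ^ 2 := by
      have e : (u * a + v * b) ^ 2 = (u ^ 2 + v ^ 2) * p - (u * b - v * a) * (u * b - v * a) := by
        rw [hab]; ring
      rw [e]
      exact dvd_sub (Dvd.intro_left _ rfl) (hd.mul_right _)
    exact hpz.dvd_of_dvd_pow this
  have h3 : ∀ b : ℤ, (p : ℤ) = a ^ 2 + b ^ 2 → (p : ℤ) ∣ u * b - v * a →
      ∃ s t : ℤ, (u = a * s - b * t ∧ v = a * t + b * s) := by
    intro b hab hd
    obtain ⟨s, hs⟩ := h2 b hab hd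
    obtain ⟨t, ht⟩ := hd
    refine ⟨s, -t, ?_, ?_⟩ <;> apply mul_left_cancel₀ hp0
    · linear_combination u * hab + a * hs + b * ht
    · linear_combination v * hab - a * ht + b * hs
  rcases hpz.dvd_or_dvd h1 with hd | hd
  · obtain ⟨s, t, hu, hv⟩ := h3 (-b) (by rw [hab]; ring) (by
      have e : u * -b - v * a = -(u * b + v * a) := by ring
      rw [e]; exact (dvd_neg).2 hd)
    exact ⟨s, t, Or.inr ⟨by rw [hu]; ring, by rw [hv]; ring⟩⟩
  · obtain ⟨s, t, hu, hv⟩ := h3 b hab hd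
    exact ⟨s, t, Or.inl ⟨hu, hv⟩⟩

theorem three_mod_four_dvd {p : ℕ} (hp : p.Prime) (h3 : p % 4 = 3) {u v : ℤ}
    (h : (p : ℤ) ∣ u ^ 2 + v ^ 2) : (p : ℤ) ∣ u ∧ (p : ℤ) ∣ v := by
  have : Fact p.Prime := ⟨hp⟩
  have key : ∀ u v : ℤ, (p : ℤ) ∣ u ^ 2 + v ^ 2 → (p : ℤ) ∣ v := by
    intro u v h
    by_contra hv
    have hv' : (v : ZMod p) ≠ 0 := by rwa [Ne, ZMod.intCast_zmod_eq_zero_iff_dvd]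
    have h0 : ((u ^ 2 + v ^ 2 : ℤ) : ZMod p) = 0 := by rwa [ZMod.intCast_zmod_eq_zero_iff_dvd]
    push_cast at h0
    have : IsSquare (-1 : ZMod p) := ⟨u / v, by field_simp; linear_combination (-1 : ZMod p) * h0⟩
    exact (ZMod.exists_sq_eq_neg_one_iff.1 this) h3
  exact ⟨key v u (by rwa [add_comm]), key u v h⟩

theorem odd_prime_cases {p : ℕ} (h : p % 2 = 1) : p % 8 = 1 ∨ p % 8 = 3 ∨ p % 8 = 5 ∨ p % 8 = 7 := by
  omega

theorem chi_of_prime {p : ℕ} {a b : ℤ} (h8 : p % 8 = 1) (hab : (p : ℤ) = a ^ 2 + b ^ 2)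
    (hbad : ¬ (a + b ≡ 3 [ZMOD 8] ∨ a + b ≡ 5 [ZMOD 8])) : Chi a b ∧ Chi a (-b) := by
  have hz : (a ^ 2 + b ^ 2) % 8 = 1 := by omega
  have ha : a % 8 = 0 ∨ a % 8 = 1 ∨ a % 8 = 2 ∨ a % 8 = 3 ∨ a % 8 = 4 ∨ a % 8 = 5 ∨ a % 8 = 6 ∨ a % 8 = 7 := by omega
  have hb : b % 8 = 0 ∨ b % 8 = 1 ∨ b % 8 = 2 ∨ b % 8 = 3 ∨ b % 8 = 4 ∨ b % 8 = 5 ∨ b % 8 = 6 ∨ b % 8 = 7 := by omega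
  simp only [Int.ModEq] at hbad
  have hm : (a * b) % 4 = 0 := by
    have e : (a * b) % 4 = ((a % 8) * (b % 8)) % 4 := by
      rw [Int.mul_emod a b, Int.mul_emod (a % 8)]; simp [Int.emod_emod_of_dvd]
    have e2 : (a ^ 2 + b ^ 2) % 8 = ((a % 8) ^ 2 + (b % 8) ^ 2) % 8 := by
      simp [pow_two, Int.add_emod, Int.mul_emod]
    rw [e]; rw [e2] at hz
    rcases ha with h | h | h | h | h | h | h | h <;> rcases hb with h' | h' | h' | h' | h' | h' | h' | h' <;>
      rw [h, h'] at hz ⊢ <;> revert hz <;> decide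
  have e2 : (a ^ 2 + b ^ 2) % 8 = ((a % 8) ^ 2 + (b % 8) ^ 2) % 8 := by
      simp [pow_two, Int.add_emod, Int.mul_emod]
  rw [e2] at hz
  have hA : (a + b) % 8 = 1 ∨ (a + b) % 8 = 7 := by
    rcases ha with h | h | h | h | h | h | h | h <;> rcases hb with h' | h' | h' | h' | h' | h' | h' | h' <;>
      rw [h, h'] at hz <;> omega
  have hB : (a + -b) % 8 = 1 ∨ (a + -b) % 8 = 7 := by
    rcases ha with h | h | h | h | h | h | h | h <;> rcases hb with h' | h' | h' | h' | h' | h' | h' | h' <;>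
      rw [h, h'] at hz <;> omega
  refine ⟨⟨hm, hA⟩, ⟨?_, hB⟩⟩
  rw [mul_neg]; omega

theorem chi_of_no_good : ∀ n : ℕ, ∀ u v : ℤ, u ^ 2 + v ^ 2 = n → n % 2 = 1 → ¬ GoodDiv n → Chi u v := by
  intro n
  induction n using Nat.strong_induction_on with
  | _ n ih =>
  intro u v huv hodd hbad
  by_cases h1 : n = 1
  · subst h1
    have huv : u ^ 2 + v ^ 2 = 1 := by exact_mod_cast huv
    have hu : -1 ≤ u ∧ u ≤ 1 := by constructor <;> nlinarith [sq_nonneg v]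
    have hv : -1 ≤ v ∧ v ≤ 1 := by constructor <;> nlinarith [sq_nonneg u]
    obtain ⟨hu1, hu2⟩ := hu
    obtain ⟨hv1, hv2⟩ := hv
    interval_cases u <;> interval_cases v <;> first | (exfalso; revert huv; norm_num; done) | (unfold Chi; norm_num)
  · obtain ⟨p, hp, hpn⟩ := Nat.exists_prime_and_dvd h1
    have hpn' : (p : ℤ) ∣ u ^ 2 + v ^ 2 := by rw [huv]; exact_mod_cast hpn
    have hpodd : p % 2 = 1 := by
      rcases hp.eq_two_or_odd with h | h
      · subst h; omega
      · exact h
    have hpos : 0 < n := by omega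
    rcases odd_prime_cases hpodd with h8 | h8 | h8 | h8
    · have : Fact p.Prime := ⟨hp⟩
      obtain ⟨a', b', hab'⟩ := Nat.Prime.sq_add_sq (p := p) (by omega)
      have hab : (p : ℤ) = (a' : ℤ) ^ 2 + (b' : ℤ) ^ 2 := by exact_mod_cast hab'.symm
      have hnb : ¬ ((a' : ℤ) + b' ≡ 3 [ZMOD 8] ∨ (a' : ℤ) + b' ≡ 5 [ZMOD 8]) := by
        intro hh
        exact hbad (Or.inl ⟨p, a', b', hp, h8, hab, hh, by exact_mod_cast hpn⟩)
      obtain ⟨c1, c2⟩ := chi_of_prime h8 hab hnb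
      obtain ⟨m, hm⟩ := hpn
      have hmlt : m < n := by
        rw [hm]; have := hp.two_le
        have : 0 < m := by rcases Nat.eq_zero_or_pos m with h | h; (subst h; omega); exact h
        nlinarith
      have hmodd : m % 2 = 1 := by
        rw [hm] at hodd
        rcases Nat.mod_two_eq_zero_or_one m with h | h
        · rw [Nat.mul_mod, h] at hodd; simp at hodd
        · exact h
      have hmbad : ¬ GoodDiv m := fun hh => hbad (hh.mono (by rw [hm]; push_cast; exact Dvd.intro_left _ rfl))
      obtain ⟨s, t, hst⟩ := gauss_div hp hab hpn'
      have hp0 : (p : ℤ) ≠ 0 := by exact_mod_cast hp.ne_zero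
      have hstm : s ^ 2 + t ^ 2 = m := by
        apply mul_left_cancel₀ hp0
        have : (p : ℤ) * m = n := by rw [hm]; push_cast; ring
        rw [this, ← huv]
        rcases hst with ⟨e1, e2⟩ | ⟨e1, e2⟩
        · rw [e1, e2, hab]; ring
        · rw [e1, e2, hab]; ring
      have hchi := ih m hmlt s t hstm hmodd hmbad
      rcases hst with ⟨e1, e2⟩ | ⟨e1, e2⟩
      · rw [e1, e2]; exact c1.mul hchi
      · have := c2.mul hchi
        rw [e1, e2]; convert this using 1 <;> ring
    · exfalso
      obtain ⟨⟨x, hx⟩, ⟨y, hy⟩⟩ := three_mod_four_dvd hp (by omega) hpn'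
      exact hbad (Or.inr (Or.inr ⟨p, hp, h8, ⟨x ^ 2 + y ^ 2, by rw [← huv, hx, hy]; ring⟩⟩))
    · exact absurd (Or.inr (Or.inl ⟨p, hp, h8, by exact_mod_cast hpn⟩)) hbad
    · obtain ⟨⟨x, hx⟩, ⟨y, hy⟩⟩ := three_mod_four_dvd hp (by omega) hpn'
      have hn : (n : ℤ) = (p : ℤ) ^ 2 * (x ^ 2 + y ^ 2) := by rw [← huv, hx, hy]; ring
      set m := (x ^ 2 + y ^ 2).toNat with hm
      have hmz : (m : ℤ) = x ^ 2 + y ^ 2 := Int.toNat_of_nonneg (by positivity)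
      have hnm : n = p ^ 2 * m := by rw [← hmz] at hn; exact_mod_cast hn
      have hmpos : 0 < m := by rcases Nat.eq_zero_or_pos m with h | h; (rw [h] at hnm; omega); exact h
      have hmlt : m < n := by
        rw [hnm]; have := hp.two_le
        nlinarith [Nat.pow_le_pow_left this 2]
      have hmodd : m % 2 = 1 := by
        rw [hnm] at hodd
        rcases Nat.mod_two_eq_zero_or_one m with h | h
        · rw [Nat.mul_mod, h] at hodd; simp at hodd
        · exact h
      have hmbad : ¬ GoodDiv m := fun hh => hbad (hh.mono (by rw [hnm]; push_cast; exact Dvd.intro_left _ rfl))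
      have hchi := ih m hmlt x y hmz.symm hmodd hmbad
      have c1 : Chi (p : ℤ) 0 := by
        refine ⟨by simp, Or.inr ?_⟩
        rw [add_zero]; omega
      have := c1.mul hchi
      rw [hx, hy]; convert this using 1 <;> ring

theorem sq_one_mod {U V n : ℤ} (h : U ^ 2 + V ^ 2 = 2 * n) (hU : U % 2 = 1) (hV : V % 2 = 1)
    (hbad : ¬ GoodDiv n) : U ^ 2 % 16 = 1 ∧ V ^ 2 % 16 = 1 := by
  obtain ⟨k, hk⟩ : ∃ k, U = 2 * k + 1 := ⟨U / 2, by omega⟩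
  obtain ⟨l, hl⟩ : ∃ l, V = 2 * l + 1 := ⟨V / 2, by omega⟩
  have hn : n = (k - l) ^ 2 + (k + l + 1) ^ 2 := by
    rw [hk, hl] at h
    linarith
  have hn0 : 0 ≤ n := by rw [hn]; positivity
  have hodd : n % 2 = 1 := by
    have : n = 2 * (k ^ 2 + l ^ 2 + k + l) + 1 := by rw [hn]; ring
    omega
  lift n to ℕ using hn0
  obtain ⟨h1, h2⟩ := chi_of_no_good n (k - l) (k + l + 1) hn.symm (by omega) hbad
  have e1 : (k - l) + (k + l + 1) = U := by rw [hk]; ring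
  rw [e1] at h2
  have hU2 : U ^ 2 % 16 = 1 := by
    rcases h2 with h2 | h2
    · obtain ⟨j, hj⟩ : ∃ j, U = 8 * j + 1 := ⟨U / 8, by omega⟩
      have : U ^ 2 = 16 * (4 * j ^ 2 + j) + 1 := by rw [hj]; ring
      omega
    · obtain ⟨j, hj⟩ : ∃ j, U = 8 * j + 7 := ⟨U / 8, by omega⟩
      have : U ^ 2 = 16 * (4 * j ^ 2 + 7 * j + 3) + 1 := by rw [hj]; ring
      omega
  refine ⟨hU2, ?_⟩
  have : V ^ 2 = U ^ 2 - 4 * ((k - l) * (k + l + 1)) := by rw [hk, hl]; ring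
  omega


theorem sq_diff_odd {x y : ℤ} (h : (x + y) % 2 = 1) : ∃ m i j : ℤ,
    (x ^ 2 - y ^ 2 = 1 + 4 * m + 8 * i ∨ x ^ 2 - y ^ 2 = -(1 + 4 * m + 8 * i)) ∧ x * y = 2 * m + 4 * j := by
  have ev : ∀ k : ℤ, ∃ i, k ^ 2 + k = 2 * i := by
    intro k
    have := Int.even_mul_succ_self k
    obtain ⟨i, hi⟩ := this
    exact ⟨i, by linear_combination hi⟩
  have key : ∀ k m : ℤ, ∃ i, (2 * k + 1) ^ 2 - (2 * m) ^ 2 = 1 + 4 * m + 8 * i := by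
    intro k m
    obtain ⟨i1, h1⟩ := ev k
    obtain ⟨i2, h2⟩ := ev m
    exact ⟨i1 - i2, by linear_combination 4 * h1 - 4 * h2⟩
  rcases Int.emod_two_eq_zero_or_one y with hy | hy
  · obtain ⟨k, hk⟩ : ∃ k, x = 2 * k + 1 := ⟨x / 2, by omega⟩
    obtain ⟨m, hm⟩ : ∃ m, y = 2 * m := ⟨y / 2, by omega⟩
    obtain ⟨i, hi⟩ := key k m
    exact ⟨m, i, k * m, Or.inl (by rw [hk, hm, hi]), by rw [hk, hm]; ring⟩
  · obtain ⟨k, hk⟩ : ∃ k, y = 2 * k + 1 := ⟨y / 2, by omega⟩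
    obtain ⟨m, hm⟩ : ∃ m, x = 2 * m := ⟨x / 2, by omega⟩
    obtain ⟨i, hi⟩ := key k m
    exact ⟨m, i, k * m, Or.inr (by rw [hk, hm, ← hi]; ring), by rw [hk, hm]; ring⟩

theorem fST_mod {c0 c1 c2 c3 : ℤ} (h0 : (c0 + c2) % 2 = 1) (h1 : (c1 + c3) % 2 = 1) :
    fS c0 c1 c2 c3 ^ 2 % 16 = (1 + 4 * (c0 * c2 + c1 * c3)) % 16 ∧
    fT c0 c1 c2 c3 ^ 2 % 16 = (1 + 4 * (c0 * c2 + c1 * c3)) % 16 ∧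
    fS c0 c1 c2 c3 % 2 = 1 ∧ fT c0 c1 c2 c3 % 2 = 1 ∧ (c0 * c2 + c1 * c3) % 2 = 0 := by
  obtain ⟨m, i, j, hd, hm⟩ := sq_diff_odd h0
  obtain ⟨n, i', j', hd', hn⟩ := sq_diff_odd h1
  have eS : fS c0 c1 c2 c3 = (c0 ^ 2 - c2 ^ 2) + 2 * (c1 * c3) := by unfold fS; ring
  have eT : fT c0 c1 c2 c3 = 2 * (c0 * c2) - (c1 ^ 2 - c3 ^ 2) := by unfold fT; ring
  rw [eS, eT, hm, hn]
  refine ⟨?_, ?_, ?_, ?_, ?_⟩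
  · rcases hd with hd | hd <;> rw [hd]
    · have : (1 + 4 * m + 8 * i + 2 * (2 * n + 4 * j')) ^ 2 =
        1 + 8 * (m + 2 * i + n + 2 * j') + 16 * (m + 2 * i + n + 2 * j') ^ 2 := by ring
      omega
    · have : (-(1 + 4 * m + 8 * i) + 2 * (2 * n + 4 * j')) ^ 2 =
        1 + 8 * (m + 2 * i - n - 2 * j') + 16 * (m + 2 * i - n - 2 * j') ^ 2 := by ring
      omega
  · rcases hd' with hd | hd <;> rw [hd]
    · have : (2 * (2 * m + 4 * j) - (1 + 4 * n + 8 * i')) ^ 2 =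
        1 + 8 * (n + 2 * i' - m - 2 * j) + 16 * (n + 2 * i' - m - 2 * j) ^ 2 := by ring
      omega
    · have : (2 * (2 * m + 4 * j) - -(1 + 4 * n + 8 * i')) ^ 2 =
        1 + 8 * (n + 2 * i' + m + 2 * j) + 16 * (n + 2 * i' + m + 2 * j) ^ 2 := by ring
      omega
  · omega
  · omega
  · omega

theorem pmod {A B X Y : ℤ} (hA : A % 2 = 1) (hB : B % 4 = 0) :
    ((A + 2 * X) * (B + 2 * Y)) % 4 = (2 * Y) % 4 := by
  obtain ⟨k, hk⟩ : ∃ k, A = 2 * k + 1 := ⟨A / 2, by omega⟩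
  obtain ⟨m, hm⟩ : ∃ m, B = 4 * m := ⟨B / 4, by omega⟩
  have : (A + 2 * X) * (B + 2 * Y) = 4 * ((A + 2 * X) * m + (k + X) * Y) + 2 * Y := by
    rw [hk, hm]; ring
  omega

theorem sq_diff_even {x y : ℤ} (h : (x + y) % 2 = 0) : (x ^ 2 - y ^ 2) % 4 = 0 := by
  obtain ⟨k, hk⟩ : ∃ k, x + y = 2 * k := ⟨(x + y) / 2, by omega⟩
  have : x ^ 2 - y ^ 2 = 4 * (k * (k - y)) := by
    have : x = 2 * k - y := by omega
    rw [this]; ring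
  omega

theorem sq_diff_odd' {x y : ℤ} (h : (x + y) % 2 = 1) : (x ^ 2 - y ^ 2) % 2 = 1 ∧ (x * y) % 2 = 0 := by
  obtain ⟨m, i, j, hd, hm⟩ := sq_diff_odd h
  omega

theorem pair_mod {e0 e4 e2 e6 X Y : ℤ} (h : (e0 + e2 + e4 + e6) % 2 = 1) :
    (((e0 ^ 2 - e4 ^ 2) + 2 * (X - e2 * e6)) * ((e2 ^ 2 - e6 ^ 2) + 2 * (Y + e0 * e4))) % 4 =
      if (e0 + e4) % 2 = 1 then (2 * Y) % 4 else (2 * X) % 4 := by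
  split_ifs with h04
  · have h26 : (e2 + e6) % 2 = 0 := by omega
    have a1 := sq_diff_odd' h04
    rw [pmod a1.1 (sq_diff_even h26)]
    omega
  · have h26 : (e2 + e6) % 2 = 1 := by omega
    have a1 := sq_diff_odd' h26
    rw [mul_comm, pmod a1.1 (sq_diff_even (by omega))]
    omega

theorem PQ_mod {e0 e1 e2 e3 e4 e5 e6 e7 : ℤ} (h0 : (e0 + e2 + e4 + e6) % 2 = 1)
    (h1 : (e1 + e3 + e5 + e7) % 2 = 1) :
    (fPr e0 e1 e2 e3 e4 e5 e6 e7 * fPi e0 e1 e2 e3 e4 e5 e6 e7 +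
     fQr e0 e1 e2 e3 e4 e5 e6 e7 * fQi e0 e1 e2 e3 e4 e5 e6 e7) % 4 =
     (2 * (e4 * e2 + e6 * e0 + e5 * e3 + e7 * e1)) % 4 := by
  have k1 := pair_mod (X := e1 * e7 + e5 * e3) (Y := e5 * e7 - e1 * e3) h0
  have k2 := pair_mod (X := -(e0 * e2 - e4 * e6)) (Y := -(e0 * e6 + e4 * e2)) h1
  have r1 : fPr e0 e1 e2 e3 e4 e5 e6 e7 * fPi e0 e1 e2 e3 e4 e5 e6 e7 =
    (((e0 ^ 2 - e4 ^ 2) + 2 * ((e1 * e7 + e5 * e3) - e2 * e6)) *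
      ((e2 ^ 2 - e6 ^ 2) + 2 * ((e5 * e7 - e1 * e3) + e0 * e4))) := by
    unfold fPr fPi; ring
  have r2 : fQr e0 e1 e2 e3 e4 e5 e6 e7 * fQi e0 e1 e2 e3 e4 e5 e6 e7 =
    (((e1 ^ 2 - e5 ^ 2) + 2 * (-(e0 * e2 - e4 * e6) - e3 * e7)) *
      ((e3 ^ 2 - e7 ^ 2) + 2 * (-(e0 * e6 + e4 * e2) + e1 * e5))) := by
    unfold fQr fQi; ring
  rw [r1, r2, Int.add_emod, k1, k2]
  have q1 : ((e0 + e4) * (e2 + e6)) % 2 = 0 := by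
    rw [Int.mul_emod]
    rcases Int.emod_two_eq_zero_or_one (e0 + e4) with h | h
    · rw [h]; simp
    · rw [show (e2 + e6) % 2 = 0 by omega]; simp
  have q2 : ((e1 + e5) * (e3 + e7)) % 2 = 0 := by
    rw [Int.mul_emod]
    rcases Int.emod_two_eq_zero_or_one (e1 + e5) with h | h
    · rw [h]; simp
    · rw [show (e3 + e7) % 2 = 0 by omega]; simp
  have q1' : (e0 + e4) * (e2 + e6) = e0 * e2 + e0 * e6 + e4 * e2 + e4 * e6 := by ring
  have q2' : (e1 + e5) * (e3 + e7) = e1 * e3 + e1 * e7 + e5 * e3 + e5 * e7 := by ring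
  rw [q1'] at q1
  rw [q2'] at q2
  have c1 : e6 * e0 = e0 * e6 := mul_comm _ _
  have c2 : e7 * e1 = e1 * e7 := mul_comm _ _
  rw [c1, c2]
  split_ifs <;> omega

theorem sq_par (x : ℤ) : (x ^ 2) % 2 = x % 2 := by
  rw [pow_two, Int.mul_emod]
  rcases Int.emod_two_eq_zero_or_one x with h | h <;> rw [h] <;> norm_num

theorem N8_par (c0 c1 c2 c3 : ℤ) : fS c0 c1 c2 c3 % 2 = (c0 + c2) % 2 ∧
    fT c0 c1 c2 c3 % 2 = (c1 + c3) % 2 := by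
  have e1 : fS c0 c1 c2 c3 = c0 ^ 2 - c2 ^ 2 + 2 * (c1 * c3) := by unfold fS; ring
  have e2 : fT c0 c1 c2 c3 = 2 * (c0 * c2) - c1 ^ 2 + c3 ^ 2 := by unfold fT; ring
  have := sq_par c0
  have := sq_par c1
  have := sq_par c2
  have := sq_par c3
  constructor
  · rw [e1]; omega
  · rw [e2]; omega

theorem PQ_par (e0 e1 e2 e3 e4 e5 e6 e7 : ℤ) :
    (fPr e0 e1 e2 e3 e4 e5 e6 e7 + fPi e0 e1 e2 e3 e4 e5 e6 e7) % 2 = (e0 + e2 + e4 + e6) % 2 ∧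
    (fQr e0 e1 e2 e3 e4 e5 e6 e7 + fQi e0 e1 e2 e3 e4 e5 e6 e7) % 2 = (e1 + e3 + e5 + e7) % 2 := by
  have := sq_par e0
  have := sq_par e1
  have := sq_par e2
  have := sq_par e3
  have := sq_par e4
  have := sq_par e5
  have := sq_par e6
  have := sq_par e7
  have k1 : fPr e0 e1 e2 e3 e4 e5 e6 e7 + fPi e0 e1 e2 e3 e4 e5 e6 e7 =
    e0 ^ 2 - e4 ^ 2 + e2 ^ 2 - e6 ^ 2 + 2 * (- e2 * e6 + (e1 * e7 + e5 * e3) + e0 * e4 - (e1 * e3 - e5 * e7)) := by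
    unfold fPr fPi; ring
  have k2 : fQr e0 e1 e2 e3 e4 e5 e6 e7 + fQi e0 e1 e2 e3 e4 e5 e6 e7 =
    -e1 ^ 2 + e5 ^ 2 - e3 ^ 2 + e7 ^ 2 + 2 * ((e0 * e2 - e4 * e6) + e3 * e7 + (e0 * e6 + e4 * e2) - e1 * e5) := by
    unfold fQr fQi; ring
  generalize (- e2 * e6 + (e1 * e7 + e5 * e3) + e0 * e4 - (e1 * e3 - e5 * e7)) = X at k1
  generalize ((e0 * e2 - e4 * e6) + e3 * e7 + (e0 * e6 + e4 * e2) - e1 * e5) = Y at k2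
  constructor
  · omega
  · omega

theorem sum_sq_even {x y : ℤ} (hx : x % 2 = 0) (hy : y % 2 = 0) : ∃ k, x ^ 2 + y ^ 2 = 4 * k := by
  obtain ⟨k, hk⟩ : ∃ k, x = 2 * k := ⟨x / 2, by omega⟩
  obtain ⟨m, hm⟩ : ∃ m, y = 2 * m := ⟨y / 2, by omega⟩
  exact ⟨k ^ 2 + m ^ 2, by rw [hk, hm]; ring⟩

theorem sum_sq_odd {x y : ℤ} (hx : x % 2 = 1) (hy : y % 2 = 1) : ∃ k, x ^ 2 + y ^ 2 = 2 * k ∧ k % 2 = 1 := by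
  obtain ⟨k, hk⟩ : ∃ k, x = 2 * k + 1 := ⟨x / 2, by omega⟩
  obtain ⟨m, hm⟩ : ∃ m, y = 2 * m + 1 := ⟨y / 2, by omega⟩
  exact ⟨2 * (k ^ 2 + k + m ^ 2 + m) + 1, by rw [hk, hm]; ring, by omega⟩

theorem odd_mul_aux {x y : ℤ} (hx : x % 2 = 1) (hy : y % 2 = 1) : (x * y) % 2 = 1 := by
  rw [Int.mul_emod, hx, hy]; norm_num

set_option maxHeartbeats 4000000 in
/-- The necessity direction, in terms of half-sums `A` and half-differences `e`. -/
theorem necessity (A0 A1 A2 A3 A4 A5 A6 A7 e0 e1 e2 e3 e4 e5 e6 e7 : ℤ)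
    (h0 : A0 % 2 = e0 % 2) (h1 : A1 % 2 = e1 % 2) (h2 : A2 % 2 = e2 % 2) (h3 : A3 % 2 = e3 % 2)
    (h4 : A4 % 2 = e4 % 2) (h5 : A5 % 2 = e5 % 2) (h6 : A6 % 2 = e6 % 2) (h7 : A7 % 2 = e7 % 2)
    (D : ℤ) (hD : D = D4 (A0 + A4) (A1 + A5) (A2 + A6) (A3 + A7) *
      N8 (A0 - A4) (A1 - A5) (A2 - A6) (A3 - A7) * N16 e0 e1 e2 e3 e4 e5 e6 e7) :
    D % 2 = 1 ∨ 128 ∣ D ∨ ∃ n, D = 64 * n ∧ GoodDiv n := by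
  have pA := N8_par (A0 - A4) (A1 - A5) (A2 - A6) (A3 - A7)
  have pE := PQ_par e0 e1 e2 e3 e4 e5 e6 e7
  have pE' := N8_par (fPr e0 e1 e2 e3 e4 e5 e6 e7) (fQr e0 e1 e2 e3 e4 e5 e6 e7)
    (fPi e0 e1 e2 e3 e4 e5 e6 e7) (fQi e0 e1 e2 e3 e4 e5 e6 e7)
  rcases Int.emod_two_eq_zero_or_one (A0 + A4 + (A2 + A6)) with hx | hx <;>
  rcases Int.emod_two_eq_zero_or_one (A1 + A5 + (A3 + A7)) with hy | hy
  · right; left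
    obtain ⟨k1, hk1⟩ := sum_sq_even (x := fS (A0 - A4) (A1 - A5) (A2 - A6) (A3 - A7))
      (y := fT (A0 - A4) (A1 - A5) (A2 - A6) (A3 - A7)) (by omega) (by omega)
    obtain ⟨k2, hk2⟩ := sum_sq_even (x := fS (fPr e0 e1 e2 e3 e4 e5 e6 e7) (fQr e0 e1 e2 e3 e4 e5 e6 e7)
      (fPi e0 e1 e2 e3 e4 e5 e6 e7) (fQi e0 e1 e2 e3 e4 e5 e6 e7))
      (y := fT (fPr e0 e1 e2 e3 e4 e5 e6 e7) (fQr e0 e1 e2 e3 e4 e5 e6 e7)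
      (fPi e0 e1 e2 e3 e4 e5 e6 e7) (fQi e0 e1 e2 e3 e4 e5 e6 e7)) (by omega) (by omega)
    obtain ⟨k3, hk3⟩ := sum_sq_even (x := A0 + A4 - (A2 + A6)) (y := A1 + A5 - (A3 + A7)) (by omega) (by omega)
    obtain ⟨k4, hk4⟩ : ∃ k, (A0 + A4 + (A2 + A6)) = 2 * k := ⟨((A0 + A4 + (A2 + A6))) / 2, by omega⟩
    obtain ⟨k5, hk5⟩ : ∃ k, (A1 + A5 + (A3 + A7)) = 2 * k := ⟨((A1 + A5 + (A3 + A7))) / 2, by omega⟩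
    refine ⟨2 * (k4 ^ 2 - k5 ^ 2) * k3 * k1 * k2, ?_⟩
    rw [hD]
    unfold N16 D4 N8
    rw [hk1, hk2, hk3, hk4, hk5]; ring
  · left
    have o1 : N8 (A0 - A4) (A1 - A5) (A2 - A6) (A3 - A7) % 2 = 1 := by
      unfold N8
      have := sq_par (fS (A0 - A4) (A1 - A5) (A2 - A6) (A3 - A7))
      have := sq_par (fT (A0 - A4) (A1 - A5) (A2 - A6) (A3 - A7))
      omega
    have o2 : N16 e0 e1 e2 e3 e4 e5 e6 e7 % 2 = 1 := by
      unfold N16 N8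
      have := sq_par (fS (fPr e0 e1 e2 e3 e4 e5 e6 e7) (fQr e0 e1 e2 e3 e4 e5 e6 e7)
        (fPi e0 e1 e2 e3 e4 e5 e6 e7) (fQi e0 e1 e2 e3 e4 e5 e6 e7))
      have := sq_par (fT (fPr e0 e1 e2 e3 e4 e5 e6 e7) (fQr e0 e1 e2 e3 e4 e5 e6 e7)
        (fPi e0 e1 e2 e3 e4 e5 e6 e7) (fQi e0 e1 e2 e3 e4 e5 e6 e7))
      omega
    rw [hD]
    refine odd_mul_aux (odd_mul_aux ?_ o1) o2
    unfold D4
    have := sq_par (A0 + A4 + (A2 + A6))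
    have := sq_par (A1 + A5 + (A3 + A7))
    have := sq_par (A0 + A4 - (A2 + A6))
    have := sq_par (A1 + A5 - (A3 + A7))
    exact odd_mul_aux (by omega) (by omega)
  · left
    have o1 : N8 (A0 - A4) (A1 - A5) (A2 - A6) (A3 - A7) % 2 = 1 := by
      unfold N8
      have := sq_par (fS (A0 - A4) (A1 - A5) (A2 - A6) (A3 - A7))
      have := sq_par (fT (A0 - A4) (A1 - A5) (A2 - A6) (A3 - A7))
      omega
    have o2 : N16 e0 e1 e2 e3 e4 e5 e6 e7 % 2 = 1 := by
      unfold N16 N8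
      have := sq_par (fS (fPr e0 e1 e2 e3 e4 e5 e6 e7) (fQr e0 e1 e2 e3 e4 e5 e6 e7)
        (fPi e0 e1 e2 e3 e4 e5 e6 e7) (fQi e0 e1 e2 e3 e4 e5 e6 e7))
      have := sq_par (fT (fPr e0 e1 e2 e3 e4 e5 e6 e7) (fQr e0 e1 e2 e3 e4 e5 e6 e7)
        (fPi e0 e1 e2 e3 e4 e5 e6 e7) (fQi e0 e1 e2 e3 e4 e5 e6 e7))
      omega
    rw [hD]
    refine odd_mul_aux (odd_mul_aux ?_ o1) o2
    unfold D4
    have := sq_par (A0 + A4 + (A2 + A6))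
    have := sq_par (A1 + A5 + (A3 + A7))
    have := sq_par (A0 + A4 - (A2 + A6))
    have := sq_par (A1 + A5 - (A3 + A7))
    exact odd_mul_aux (by omega) (by omega)
  · right
    obtain ⟨k1, hk1, ho1⟩ := sum_sq_odd (x := fS (A0 - A4) (A1 - A5) (A2 - A6) (A3 - A7))
      (y := fT (A0 - A4) (A1 - A5) (A2 - A6) (A3 - A7)) (by omega) (by omega)
    obtain ⟨k2, hk2, ho2⟩ := sum_sq_odd (x := fS (fPr e0 e1 e2 e3 e4 e5 e6 e7) (fQr e0 e1 e2 e3 e4 e5 e6 e7)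
      (fPi e0 e1 e2 e3 e4 e5 e6 e7) (fQi e0 e1 e2 e3 e4 e5 e6 e7))
      (y := fT (fPr e0 e1 e2 e3 e4 e5 e6 e7) (fQr e0 e1 e2 e3 e4 e5 e6 e7)
      (fPi e0 e1 e2 e3 e4 e5 e6 e7) (fQi e0 e1 e2 e3 e4 e5 e6 e7)) (by omega) (by omega)
    obtain ⟨k3, hk3, ho3⟩ := sum_sq_odd (x := A0 + A4 - (A2 + A6)) (y := A1 + A5 - (A3 + A7)) (by omega) (by omega)
    obtain ⟨k, hk⟩ : ∃ k, (A0 + A4 + (A2 + A6)) ^ 2 - (A1 + A5 + (A3 + A7)) ^ 2 = 8 * k := by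
      obtain ⟨x, hx'⟩ : ∃ x, A0 + A4 + (A2 + A6) = 2 * x + 1 := ⟨(A0 + A4 + (A2 + A6)) / 2, by omega⟩
      obtain ⟨y, hy'⟩ : ∃ y, A1 + A5 + (A3 + A7) = 2 * y + 1 := ⟨(A1 + A5 + (A3 + A7)) / 2, by omega⟩
      obtain ⟨i, hi⟩ := Int.even_mul_succ_self x
      obtain ⟨j, hj⟩ := Int.even_mul_succ_self y
      exact ⟨i - j, by rw [hx', hy']; linear_combination 4 * hi - 4 * hj⟩
    have hDn : D = 64 * (k * k3 * k1 * k2) := by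
      rw [hD]
      unfold N16 D4 N8
      rw [hk1, hk2, hk3, hk]; ring
    rcases Int.emod_two_eq_zero_or_one k with hke | hko
    · left
      obtain ⟨m, hm⟩ : ∃ m, k = 2 * m := ⟨k / 2, by omega⟩
      exact ⟨m * k3 * k1 * k2, by rw [hDn, hm]; ring⟩
    right
    refine ⟨_, hDn, ?_⟩
    by_contra hbad
    have b1 := sq_one_mod hk1 (by omega) (by omega) (fun h => hbad (h.mono ⟨k * k3 * k2, by ring⟩))
    have b2 := sq_one_mod hk2 (by omega) (by omega) (fun h => hbad (h.mono ⟨k * k3 * k1, by ring⟩))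
    have b3 := sq_one_mod hk3 (by omega) (by omega) (fun h => hbad (h.mono ⟨k * k1 * k2, by ring⟩))
    have m1 := fST_mod (c0 := A0 - A4) (c1 := A1 - A5) (c2 := A2 - A6) (c3 := A3 - A7) (by omega) (by omega)
    have m2 := fST_mod (c0 := fPr e0 e1 e2 e3 e4 e5 e6 e7) (c1 := fQr e0 e1 e2 e3 e4 e5 e6 e7)
      (c2 := fPi e0 e1 e2 e3 e4 e5 e6 e7) (c3 := fQi e0 e1 e2 e3 e4 e5 e6 e7) (by omega) (by omega)
    have m3 := PQ_mod (e0 := e0) (e1 := e1) (e2 := e2) (e3 := e3) (e4 := e4) (e5 := e5) (e6 := e6)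
      (e7 := e7) (by omega) (by omega)
    have par : ∀ {x y u v : ℤ}, x % 2 = u % 2 → y % 2 = v % 2 → (x * y) % 2 = (u * v) % 2 := by
      intro x y u v hx hy
      rw [Int.mul_emod, hx, hy, ← Int.mul_emod]
    have g1 := par h4 h2
    have g2 := par h6 h0
    have g3 := par h5 h3
    have g4 := par h7 h1
    have f1 : (A0 + A4 + (A2 + A6)) ^ 2 - (A0 + A4 - (A2 + A6)) ^ 2
      = 4 * ((A0 - A4) * (A2 - A6)) + 8 * (A4 * A2 + A6 * A0) := by ring
    have f2 : (A1 + A5 + (A3 + A7)) ^ 2 - (A1 + A5 - (A3 + A7)) ^ 2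
      = 4 * ((A1 - A5) * (A3 - A7)) + 8 * (A5 * A3 + A7 * A1) := by ring
    have par2 := sq_diff_odd' (x := A0 - A4) (y := A2 - A6) (by omega)
    have par3 := sq_diff_odd' (x := A1 - A5) (y := A3 - A7) (by omega)
    omega


/-! ### Sufficiency -/

theorem mem_S16 (a0 a1 a2 a3 a4 a5 a6 a7 a8 a9 a10 a11 a12 a13 a14 a15 : ℤ) :
    detF a0 a1 a2 a3 a4 a5 a6 a7 a8 a9 a10 a11 a12 a13 a14 a15 ∈ S16 := by
  refine ⟨![a0, a1, a2, a3, a4, a5, a6, a7, a8, a9, a10, a11, a12, a13, a14, a15], ?_⟩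
  rw [det_formula]
  rfl

theorem mul_S16 {m n : ℤ} (hm : m ∈ S16) (hn : n ∈ S16) : m * n ∈ S16 := by
  obtain ⟨a, rfl⟩ := hm
  obtain ⟨b, rfl⟩ := hn
  have e : ∀ a, circMatrix a = Matrix.circulant a := fun a => rfl
  refine ⟨Matrix.mulVec (Matrix.circulant a) b, ?_⟩
  rw [← Matrix.det_mul, e, e, e, Matrix.circulant_mul]

theorem odd_S16 {n : ℤ} (h : n % 2 = 1) : n ∈ S16 := by
  obtain ⟨m, hm⟩ : ∃ m, m = n / 16 := ⟨_, rfl⟩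
  have hc : n = 16 * m + 1 ∨ n = 16 * m + 3 ∨ n = 16 * m + 5 ∨ n = 16 * m + 7 ∨
    n = 16 * m + 9 ∨ n = 16 * m + 11 ∨ n = 16 * m + 13 ∨ n = 16 * m + 15 := by omega
  rcases hc with h | h | h | h | h | h | h | h
  · have := mem_S16 (1 + m) m m m m m m m m m m m m m m m
    convert this using 1
    simp only [detF, D4, N8, N16, fS, fT, fPr, fPi, fQr, fQi, h]; ring
  · have := mem_S16 (1 + m) (1 + m) (1 + m) m m m m m m m m m m m m m
    convert this using 1
    simp only [detF, D4, N8, N16, fS, fT, fPr, fPi, fQr, fQi, h]; ring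
  · have := mem_S16 (1 + m) (1 + m) (1 + m) (1 + m) (1 + m) m m m m m m m m m m m
    convert this using 1
    simp only [detF, D4, N8, N16, fS, fT, fPr, fPi, fQr, fQi, h]; ring
  · have := mem_S16 (1 + m) (1 + m) (1 + m) (1 + m) (1 + m) (1 + m) (1 + m) m m m m m m m m m
    convert this using 1
    simp only [detF, D4, N8, N16, fS, fT, fPr, fPi, fQr, fQi, h]; ring
  · have := mem_S16 (1 + m) (1 + m) (1 + m) (1 + m) (1 + m) (1 + m) (1 + m) (1 + m) (1 + m)
      m m m m m m m
    convert this using 1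
    simp only [detF, D4, N8, N16, fS, fT, fPr, fPi, fQr, fQi, h]; ring
  · have := mem_S16 (1 + m) (1 + m) (1 + m) (1 + m) (1 + m) (1 + m) (1 + m) (1 + m) (1 + m)
      (1 + m) (1 + m) m m m m m
    convert this using 1
    simp only [detF, D4, N8, N16, fS, fT, fPr, fPi, fQr, fQi, h]; ring
  · have := mem_S16 (1 + m) (1 + m) (1 + m) (1 + m) (1 + m) (1 + m) (1 + m) (1 + m) (1 + m)
      (1 + m) (1 + m) (1 + m) (1 + m) m m m
    convert this using 1
    simp only [detF, D4, N8, N16, fS, fT, fPr, fPi, fQr, fQi, h]; ring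
  · have := mem_S16 (1 + m) (1 + m) (1 + m) (1 + m) (1 + m) (1 + m) (1 + m) (1 + m) (1 + m)
      (1 + m) (1 + m) (1 + m) (1 + m) (1 + m) (1 + m) m
    convert this using 1
    simp only [detF, D4, N8, N16, fS, fT, fPr, fPi, fQr, fQi, h]; ring

theorem neg_S16 {n : ℤ} (h : n ∈ S16) : -n ∈ S16 := by
  have := mul_S16 (odd_S16 (n := -1) (by norm_num)) h
  simpa using this

theorem mem128_S16 (n : ℤ) : 128 * n ∈ S16 := by
  rcases Int.emod_two_eq_zero_or_one n with h | h
  · obtain ⟨m, hm⟩ : ∃ m, n = 2 * m := ⟨n / 2, by omega⟩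
    have := mem_S16 (1 + m) (-1 + m) m m m m m m m m m m m m m m
    convert this using 1
    simp only [detF, D4, N8, N16, fS, fT, fPr, fPi, fQr, fQi, hm]; ring
  · obtain ⟨m, hm⟩ : ∃ m, n = -(2 * m + 1) := ⟨-((n + 1) / 2), by omega⟩
    have := mem_S16 m m m (1 + m) (1 + m) (1 + m) m m m (1 + m) (1 + m) (1 + m) (1 + m) (1 + m) m m
    convert this using 1
    simp only [detF, D4, N8, N16, fS, fT, fPr, fPi, fQr, fQi, hm]; ring

theorem fam5 {U V : ℤ} (hU : U % 8 = 1) (hV : V % 8 = 3) : 32 * (U ^ 2 + V ^ 2) ∈ S16 := by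
  obtain ⟨s, hs⟩ : ∃ s, U = 8 * s + 1 := ⟨U / 8, by omega⟩
  obtain ⟨t, ht⟩ : ∃ t, V = 8 * t + 3 := ⟨V / 8, by omega⟩
  have := neg_S16 (mem_S16 s t (-s) (-t) s (1 + t) (-s) (-t) s (1 + t) (-s) (-t) (1 + s) (1 + t) (-s) (-t))
  convert this using 1
  simp only [detF, D4, N8, N16, fS, fT, fPr, fPi, fQr, fQi, hs, ht]; ring

theorem fam5' {U V : ℤ} (hU : U ^ 2 % 16 = 1) (hV : V ^ 2 % 16 = 9) : 32 * (U ^ 2 + V ^ 2) ∈ S16 := by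
  have h1 : ∀ U : ℤ, ∃ q, U ^ 2 = 16 * q + (U % 8) ^ 2 := by
    intro U
    refine ⟨4 * (U / 8) ^ 2 + (U / 8) * (U % 8), ?_⟩
    have := Int.emod_add_mul_ediv U 8
    nth_rewrite 1 [← this]; ring
  have hU' : U % 8 = 1 ∨ (-U) % 8 = 1 := by
    obtain ⟨q, hq⟩ := h1 U
    have hr : U % 8 = 0 ∨ U % 8 = 1 ∨ U % 8 = 2 ∨ U % 8 = 3 ∨ U % 8 = 4 ∨ U % 8 = 5 ∨ U % 8 = 6 ∨ U % 8 = 7 := by omega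
    rcases hr with h | h | h | h | h | h | h | h <;> rw [h] at hq <;> omega
  have hV' : V % 8 = 3 ∨ (-V) % 8 = 3 := by
    obtain ⟨q, hq⟩ := h1 V
    have hr : V % 8 = 0 ∨ V % 8 = 1 ∨ V % 8 = 2 ∨ V % 8 = 3 ∨ V % 8 = 4 ∨ V % 8 = 5 ∨ V % 8 = 6 ∨ V % 8 = 7 := by omega
    rcases hr with h | h | h | h | h | h | h | h <;> rw [h] at hq <;> omega
  rcases hU' with h | h <;> rcases hV' with h' | h'
  · exact fam5 h h'
  · have := fam5 h h'; rwa [neg_sq] at this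
  · have := fam5 h h'; rwa [neg_sq] at this
  · have := fam5 h h'; rwa [neg_sq, neg_sq] at this

theorem famC1 {c0 c1 c2 c3 : ℤ} (h0 : c0 % 4 = 1) (h1 : c1 % 2 = 1) (h2 : c2 % 2 = 0) (h3 : c3 % 2 = 0)
    (h : (c0 * c2 + c1 * c3) % 4 = 2) : 32 * N8 c0 c1 c2 c3 ∈ S16 := by
  obtain ⟨k0, hk0⟩ : ∃ k, c0 = 4 * k + 1 := ⟨c0 / 4, by omega⟩
  have h23 : (c2 % 4 = 2 ∧ c3 % 4 = 0) ∨ (c2 % 4 = 0 ∧ c3 % 4 = 2) := by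
    obtain ⟨k1, hk1⟩ : ∃ k, c1 = 2 * k + 1 := ⟨c1 / 2, by omega⟩
    obtain ⟨k2, hk2⟩ : ∃ k, c2 = 2 * k := ⟨c2 / 2, by omega⟩
    obtain ⟨k3, hk3⟩ : ∃ k, c3 = 2 * k := ⟨c3 / 2, by omega⟩
    have : c0 * c2 + c1 * c3 = 4 * (2 * k0 * k2 + k1 * k3) + 2 * (k2 + k3) := by
      rw [hk0, hk1, hk2, hk3]; ring
    omega
  have h1' : c1 % 4 = 1 ∨ c1 % 4 = 3 := by omega
  rcases h1' with h1 | h1 <;> rcases h23 with ⟨h2, h3⟩ | ⟨h2, h3⟩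
  · obtain ⟨k1, hk1⟩ : ∃ k, c1 = 4 * k + 1 := ⟨c1 / 4, by omega⟩
    obtain ⟨k2, hk2⟩ : ∃ k, c2 = 4 * k + 2 := ⟨c2 / 4, by omega⟩
    obtain ⟨k3, hk3⟩ : ∃ k, c3 = 4 * k := ⟨c3 / 4, by omega⟩
    have := mem_S16 k0 k1 k2 k3 (-1 - k0) (-1 - k1) (-1 - k2) (-k3)
      k0 k1 k2 k3 (-k0) (-k1) (-1 - k2) (-k3)
    convert this using 1
    simp only [detF, D4, N8, N16, fS, fT, fPr, fPi, fQr, fQi, hk0, hk1, hk2, hk3]; ring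
  · obtain ⟨k1, hk1⟩ : ∃ k, c1 = 4 * k + 1 := ⟨c1 / 4, by omega⟩
    obtain ⟨k2, hk2⟩ : ∃ k, c2 = 4 * k := ⟨c2 / 4, by omega⟩
    obtain ⟨k3, hk3⟩ : ∃ k, c3 = 4 * k + 2 := ⟨c3 / 4, by omega⟩
    have := neg_S16 (mem_S16 k0 k1 k2 k3 (-1 - k0) (-1 - k1) (-k2) (-1 - k3)
      k0 k1 k2 k3 (-k0) (-k1) (-k2) (-1 - k3))
    convert this using 1
    simp only [detF, D4, N8, N16, fS, fT, fPr, fPi, fQr, fQi, hk0, hk1, hk2, hk3]; ring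
  · obtain ⟨k1, hk1⟩ : ∃ k, c1 = 4 * k - 1 := ⟨(c1 + 1) / 4, by omega⟩
    obtain ⟨k2, hk2⟩ : ∃ k, c2 = 4 * k + 2 := ⟨c2 / 4, by omega⟩
    obtain ⟨k3, hk3⟩ : ∃ k, c3 = 4 * k := ⟨c3 / 4, by omega⟩
    have := mem_S16 k0 (-1 + k1) k2 k3 (-1 - k0) (-k1) (-1 - k2) (-k3)
      k0 k1 k2 k3 (-k0) (-k1) (-1 - k2) (-k3)
    convert this using 1
    simp only [detF, D4, N8, N16, fS, fT, fPr, fPi, fQr, fQi, hk0, hk1, hk2, hk3]; ring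
  · obtain ⟨k1, hk1⟩ : ∃ k, c1 = 4 * k - 1 := ⟨(c1 + 1) / 4, by omega⟩
    obtain ⟨k2, hk2⟩ : ∃ k, c2 = 4 * k := ⟨c2 / 4, by omega⟩
    obtain ⟨k3, hk3⟩ : ∃ k, c3 = 4 * k + 2 := ⟨c3 / 4, by omega⟩
    have := neg_S16 (mem_S16 k0 (-1 + k1) k2 k3 (-1 - k0) (-k1) (-k2) (-1 - k3)
      k0 k1 k2 k3 (-k0) (-k1) (-k2) (-1 - k3))
    convert this using 1
    simp only [detF, D4, N8, N16, fS, fT, fPr, fPi, fQr, fQi, hk0, hk1, hk2, hk3]; ring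

theorem famC2 {c0 c1 c2 c3 : ℤ} (h0 : c0 % 2 = 1) (h1 : c1 % 2 = 1) (h2 : c2 % 2 = 0) (h3 : c3 % 2 = 0)
    (h : (c0 * c2 + c1 * c3) % 4 = 2) : 32 * N8 c0 c1 c2 c3 ∈ S16 := by
  by_cases h4 : c0 % 4 = 1
  · exact famC1 h4 h1 h2 h3 h
  · have := famC1 (c0 := -c0) (c1 := -c1) (c2 := -c2) (c3 := -c3) (by omega) (by omega) (by omega)
      (by omega) (by rw [neg_mul_neg, neg_mul_neg]; exact h)
    convert this using 1
    simp only [N8, fS, fT]; ring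

theorem famC3 {c0 c1 c2 c3 : ℤ} (h0 : c0 % 2 = 1) (h2 : c2 % 2 = 0) (h1 : (c1 + c3) % 2 = 1)
    (h : (c0 * c2 + c1 * c3) % 4 = 2) : 32 * N8 c0 c1 c2 c3 ∈ S16 := by
  by_cases h4 : c1 % 2 = 1
  · exact famC2 h0 h4 h2 (by omega) h
  · have e : (-c3) * c1 + c0 * c2 = (c0 * c2 + c1 * c3) - 2 * (c1 * c3) := by ring
    have e2 : (c1 * c3) % 2 = 0 := by rw [Int.mul_emod, show c1 % 2 = 0 by omega]; simp
    have := famC2 (c0 := -c3) (c1 := c0) (c2 := c1) (c3 := c2) (by omega) (by omega) (by omega)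
      (by omega) (by rw [e]; omega)
    convert this using 1
    simp only [N8, fS, fT]; ring

theorem famC {c0 c1 c2 c3 : ℤ} (h0 : (c0 + c2) % 2 = 1) (h1 : (c1 + c3) % 2 = 1)
    (h : (c0 * c2 + c1 * c3) % 4 = 2) : 32 * N8 c0 c1 c2 c3 ∈ S16 := by
  by_cases h4 : c0 % 2 = 1
  · exact famC3 h4 (by omega) h1 h
  · have e : (-c2) * c0 + (-c3) * c1 = -(c0 * c2 + c1 * c3) := by ring
    have := famC3 (c0 := -c2) (c1 := -c3) (c2 := c0) (c3 := c1) (by omega) (by omega) (by omega)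
      (by rw [e]; omega)
    convert this using 1
    simp only [N8, fS, fT]; ring

/-! ### The ring of eighth cyclotomic integers is principal -/

@[ext]
structure Z8 where
  w : ℤ
  x : ℤ
  y : ℤ
  z : ℤ

namespace Z8

def mul (a b : Z8) : Z8 :=
  ⟨a.w * b.w - a.x * b.z - a.y * b.y - a.z * b.x,
   a.w * b.x + a.x * b.w - a.y * b.z - a.z * b.y,
   a.w * b.y + a.x * b.x + a.y * b.w - a.z * b.z,
   a.w * b.z + a.x * b.y + a.y * b.x + a.z * b.w⟩

def sub (a b : Z8) : Z8 := ⟨a.w - b.w, a.x - b.x, a.y - b.y, a.z - b.z⟩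

def S (a : Z8) : ℤ := fS a.w a.x a.y a.z
def T (a : Z8) : ℤ := fT a.w a.x a.y a.z
def nm (a : Z8) : ℤ := N8 a.w a.x a.y a.z

theorem nm_eq (a : Z8) : a.nm = a.S ^ 2 + a.T ^ 2 := rfl

theorem S_mul (a b : Z8) : (mul a b).S = a.S * b.S - a.T * b.T := by
  simp only [mul, S, T, fS, fT]; ring

theorem T_mul (a b : Z8) : (mul a b).T = a.S * b.T + a.T * b.S := by
  simp only [mul, S, T, fS, fT]; ring

theorem nm_mul (a b : Z8) : (mul a b).nm = a.nm * b.nm := by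
  rw [nm_eq, nm_eq, nm_eq, S_mul, T_mul]; ring

def adj (a : Z8) : Z8 := mul ⟨a.w, -a.x, a.y, -a.z⟩ ⟨a.S, 0, -a.T, 0⟩

theorem nm_adj (a : Z8) : a.adj.nm = a.nm ^ 3 := by
  have h1 : nm ⟨a.w, -a.x, a.y, -a.z⟩ = a.nm := by simp only [nm, N8, fS, fT]; ring
  have h2 : nm ⟨a.S, 0, -a.T, 0⟩ = a.nm ^ 2 := by rw [nm_eq a]; simp only [nm, N8, fS, fT]; ring
  rw [adj, nm_mul, h1, h2]; ring

theorem nm_nonneg (a : Z8) : 0 ≤ a.nm := by rw [nm_eq]; positivity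

theorem nm_form (a : Z8) : a.nm = (a.w ^ 2 + a.x ^ 2 + a.y ^ 2 + a.z ^ 2) ^ 2
    - 2 * (a.w * a.x + a.x * a.y + a.y * a.z - a.z * a.w) ^ 2 := by
  simp only [nm, N8, fS, fT]; ring

theorem eq_zero_of_nm (a : Z8) (h : a.nm = 0) : a = ⟨0, 0, 0, 0⟩ := by
  rw [nm_form] at h
  set s := a.w ^ 2 + a.x ^ 2 + a.y ^ 2 + a.z ^ 2 with hs
  set t := a.w * a.x + a.x * a.y + a.y * a.z - a.z * a.w
  have hz : (⟨s, t⟩ : ℤ√2) = 0 := by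
    rw [← Zsqrtd.norm_eq_zero (d := 2)]
    · rw [Zsqrtd.norm_def]; simp only; linear_combination h
    · intro n hn
      have : n < 2 := by nlinarith
      have : -2 < n := by nlinarith
      interval_cases n <;> omega
  have hs0 : s = 0 := congrArg Zsqrtd.re hz
  have h1 : a.w = 0 := by
    have : a.w ^ 2 = 0 := by nlinarith [sq_nonneg a.w, sq_nonneg a.x, sq_nonneg a.y, sq_nonneg a.z]
    exact pow_eq_zero_iff (two_ne_zero) |>.1 this
  have h2 : a.x = 0 := by
    have : a.x ^ 2 = 0 := by nlinarith [sq_nonneg a.w, sq_nonneg a.x, sq_nonneg a.y, sq_nonneg a.z]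
    exact pow_eq_zero_iff (two_ne_zero) |>.1 this
  have h3 : a.y = 0 := by
    have : a.y ^ 2 = 0 := by nlinarith [sq_nonneg a.w, sq_nonneg a.x, sq_nonneg a.y, sq_nonneg a.z]
    exact pow_eq_zero_iff (two_ne_zero) |>.1 this
  have h4 : a.z = 0 := by
    have : a.z ^ 2 = 0 := by nlinarith [sq_nonneg a.w, sq_nonneg a.x, sq_nonneg a.y, sq_nonneg a.z]
    exact pow_eq_zero_iff (two_ne_zero) |>.1 this
  exact Z8.ext h1 h2 h3 h4

theorem round (y n : ℤ) (hn : 0 < n) : ∃ q, -n ≤ 2 * (y - q * n) ∧ 2 * (y - q * n) < n := by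
  refine ⟨(2 * y + n) / (2 * n), ?_⟩
  have h1 := Int.emod_add_mul_ediv (2 * y + n) (2 * n)
  have h2 := Int.emod_nonneg (2 * y + n) (show 2 * n ≠ 0 by omega)
  have h3 := Int.emod_lt_of_pos (2 * y + n) (show 0 < 2 * n by omega)
  constructor <;> nlinarith

theorem nm_small (d : Z8) (n : ℤ) (hn : 0 < n) (hw : -n ≤ 2 * d.w ∧ 2 * d.w < n)
    (hx : -n ≤ 2 * d.x ∧ 2 * d.x < n) (hy : -n ≤ 2 * d.y ∧ 2 * d.y < n)
    (hz : -n ≤ 2 * d.z ∧ 2 * d.z < n) : d.nm < n ^ 4 := by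
  rw [nm_form]
  have sq : ∀ t : ℤ, -n ≤ 2 * t ∧ 2 * t < n → 4 * t ^ 2 ≤ n ^ 2 ∧ (4 * t ^ 2 = n ^ 2 → 2 * t = -n) := by
    rintro t ⟨h1, h2⟩
    refine ⟨by nlinarith, fun h => ?_⟩
    have : (n - 2 * t) * (n + 2 * t) = 0 := by linear_combination -h
    rcases mul_eq_zero.1 this with h | h <;> linarith
  obtain ⟨a1, b1⟩ := sq _ hw
  obtain ⟨a2, b2⟩ := sq _ hx
  obtain ⟨a3, b3⟩ := sq _ hy
  obtain ⟨a4, b4⟩ := sq _ hz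
  set s := d.w ^ 2 + d.x ^ 2 + d.y ^ 2 + d.z ^ 2 with hs
  have hs0 : 0 ≤ s := by positivity
  have hsn : s ≤ n ^ 2 := by linarith
  rcases lt_or_eq_of_le hsn with h | h
  · have : s ^ 2 < (n ^ 2) ^ 2 := by nlinarith
    nlinarith [sq_nonneg (d.w * d.x + d.x * d.y + d.y * d.z - d.z * d.w)]
  · have e1 := b1 (by linarith)
    have e2 := b2 (by linarith)
    have e3 := b3 (by linarith)
    have e4 := b4 (by linarith)
    have en : n = -2 * d.w := by linarith
    have ex : d.x = d.w := by linarith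
    have ey : d.y = d.w := by linarith
    have ez : d.z = d.w := by linarith
    rw [h, ex, ey, ez]
    have : 0 < (d.w * d.w + d.w * d.w + d.w * d.w - d.w * d.w) ^ 2 := by
      have : 0 < d.w * d.w := by nlinarith
      have : 0 < d.w * d.w + d.w * d.w + d.w * d.w - d.w * d.w := by linarith
      positivity
    have e : (n ^ 2) ^ 2 = n ^ 4 := by ring
    linarith

theorem euclid (c x : Z8) (hc : 0 < c.nm) : ∃ q, (sub x (mul q c)).nm < c.nm := by
  set n := c.nm with hn
  set y := mul x c.adj with hy
  obtain ⟨q0, h0⟩ := round y.w n hc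
  obtain ⟨q1, h1⟩ := round y.x n hc
  obtain ⟨q2, h2⟩ := round y.y n hc
  obtain ⟨q3, h3⟩ := round y.z n hc
  refine ⟨⟨q0, q1, q2, q3⟩, ?_⟩
  set δ := sub x (mul ⟨q0, q1, q2, q3⟩ c) with hδ
  have key : mul δ c.adj = ⟨y.w - q0 * n, y.x - q1 * n, y.y - q2 * n, y.z - q3 * n⟩ := by
    rw [hδ, hy, hn]
    simp only [mul, sub, adj, nm, N8, S, T, Z8.mk.injEq]
    refine ⟨?_, ?_, ?_, ?_⟩ <;> (simp only [fS, fT]; ring)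
  have hlt := nm_small (mul δ c.adj) n hc (by rw [key]; exact h0) (by rw [key]; exact h1)
    (by rw [key]; exact h2) (by rw [key]; exact h3)
  rw [nm_mul, nm_adj, ← hn] at hlt
  have : δ.nm * n ^ 3 < n * n ^ 3 := by linarith [show n * n ^ 3 = n ^ 4 by ring]
  exact lt_of_mul_lt_mul_right this (by positivity)

theorem principal (p : ℕ) (hp : 0 < p) (w : Z8) (hw : (p : ℤ) ∣ w.nm) :
    ∃ c : Z8, 0 < c.nm ∧ c.nm ∣ (p : ℤ) ^ 4 ∧ c.nm ∣ w.nm ∧ (p : ℤ) ∣ c.nm := by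
  classical
  let comb : Z8 → Z8 → Z8 := fun u v =>
    ⟨u.w * p + (mul v w).w, u.x * p + (mul v w).x, u.y * p + (mul v w).y, u.z * p + (mul v w).z⟩
  let I : Z8 → Prop := fun x => ∃ u v, x = comb u v
  have hIp : I ⟨p, 0, 0, 0⟩ := ⟨⟨1, 0, 0, 0⟩, ⟨0, 0, 0, 0⟩, by simp [comb, mul]⟩
  have hIw : I w := ⟨⟨0, 0, 0, 0⟩, ⟨1, 0, 0, 0⟩, by simp [comb, mul]⟩
  have hIsub : ∀ q x c, I x → I c → I (sub x (mul q c)) := by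
    rintro q x c ⟨u, v, rfl⟩ ⟨u', v', rfl⟩
    refine ⟨sub u (mul q u'), sub v (mul q v'), ?_⟩
    simp only [comb, mul, sub, Z8.mk.injEq]
    refine ⟨?_, ?_, ?_, ?_⟩ <;> ring
  have hIdvd : ∀ x, I x → (p : ℤ) ∣ x.nm := by
    rintro x ⟨u, v, rfl⟩
    have h1 : (p : ℤ) ∣ (mul v w).nm := by rw [nm_mul]; exact hw.mul_left _
    rw [← ZMod.intCast_zmod_eq_zero_iff_dvd] at h1 ⊢
    rw [← h1]
    simp only [comb, nm, N8, fS, fT]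
    push_cast
    simp
  have hpn : nm ⟨p, 0, 0, 0⟩ = (p : ℤ) ^ 4 := by simp only [nm, N8, fS, fT]; ring
  have hex : ∃ n : ℕ, ∃ c, I c ∧ c.nm = n ∧ 0 < n :=
    ⟨p ^ 4, _, hIp, by rw [hpn]; push_cast; rfl, by positivity⟩
  obtain ⟨c, hIc, hcn, hpos⟩ := Nat.find_spec hex
  have hc0 : 0 < c.nm := by rw [hcn]; exact_mod_cast hpos
  have hdvd : ∀ x, I x → c.nm ∣ x.nm := by
    intro x hx
    obtain ⟨q, hq⟩ := euclid c x hc0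
    have hz : (sub x (mul q c)).nm = 0 := by
      by_contra hne
      have hge := nm_nonneg (sub x (mul q c))
      have hlt : (sub x (mul q c)).nm.toNat < Nat.find hex := by omega
      exact Nat.find_min hex hlt ⟨_, hIsub q x c hx hIc, by omega, by omega⟩
    have h0 := eq_zero_of_nm _ hz
    simp only [sub, Z8.mk.injEq] at h0
    have : x = mul q c := by
      cases x
      simp only [mul, Z8.mk.injEq] at h0 ⊢
      omega
    rw [this, nm_mul]
    exact Dvd.intro_left _ rfl
  exact ⟨c, hc0, by rw [← hpn]; exact hdvd _ hIp, hdvd _ hIw, hIdvd c hIc⟩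

end Z8

/-- multiply by `1 - ζ` and conclude -/
theorem famZ8 (c : Z8) (n : ℤ) (hc : c.nm = n) (hn : n % 2 = 1)
    (hST : ∀ s t : ℤ, s ^ 2 + t ^ 2 = 2 * n → s ^ 2 % 16 = 9) : 64 * n ∈ S16 := by
  set d := Z8.mul ⟨1, -1, 0, 0⟩ c with hd
  have hdn : d.nm = 2 * n := by
    rw [hd, Z8.nm_mul, hc]; congr 1
  have hs := hST d.S d.T (by rw [← hdn]; rfl)
  have ht := hST d.T d.S (by rw [← hdn, Z8.nm_eq]; ring)
  obtain ⟨p1, p2⟩ := N8_par d.w d.x d.y d.z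
  have q1 := sq_par d.S
  have q2 := sq_par d.T
  unfold Z8.S at hs q1
  unfold Z8.T at ht q2
  have m := fST_mod (c0 := d.w) (c1 := d.x) (c2 := d.y) (c3 := d.z) (by omega) (by omega)
  have := famC (c0 := d.w) (c1 := d.x) (c2 := d.y) (c3 := d.z) (by omega) (by omega) (by omega)
  have e : 64 * n = 32 * N8 d.w d.x d.y d.z := by
    have : N8 d.w d.x d.y d.z = 2 * n := hdn
    rw [this]; ring
  rw [e]; exact this

theorem case5 {p : ℕ} (hp : p.Prime) (h : p % 8 = 5) : (64 * p : ℤ) ∈ S16 := by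
  have : Fact p.Prime := ⟨hp⟩
  obtain ⟨a, b, hab⟩ := Nat.Prime.sq_add_sq (p := p) (by omega)
  have hab' : (a : ℤ) ^ 2 + (b : ℤ) ^ 2 = p := by exact_mod_cast hab
  have e : (64 * p : ℤ) = 32 * (((a : ℤ) + b) ^ 2 + ((a : ℤ) - b) ^ 2) := by
    rw [← hab']; ring
  have hodd : ((a : ℤ) + b) % 2 = 1 := by
    have := sq_par a
    have := sq_par b
    omega
  have hsq : ∀ x : ℤ, x % 2 = 1 → x ^ 2 % 16 = 1 ∨ x ^ 2 % 16 = 9 := by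
    intro x hx
    obtain ⟨k, hk⟩ : ∃ k, x = 2 * k + 1 := ⟨x / 2, by omega⟩
    obtain ⟨i, hi⟩ := Int.even_mul_succ_self k
    have : x ^ 2 = 8 * i + 1 := by rw [hk]; linear_combination 4 * hi
    omega
  have h1 := hsq _ hodd
  have h2 := hsq ((a : ℤ) - b) (by omega)
  have hsum : ((a : ℤ) + b) ^ 2 + ((a : ℤ) - b) ^ 2 = 2 * p := by rw [← hab']; ring
  rw [e]
  rcases h1 with h1 | h1 <;> rcases h2 with h2 | h2
  · omega
  · exact fam5' h1 h2
  · rw [add_comm (((a : ℤ) + b) ^ 2)]; exact fam5' h2 h1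
  · omega

theorem prime_pow_nm {p : ℕ} (hp : p.Prime) {n : ℤ} (h0 : 0 < n) (h : n ∣ (p : ℤ) ^ 4) :
    ∃ j, n = (p : ℤ) ^ j := by
  lift n to ℕ using h0.le
  have h' : n ∣ p ^ 4 := by exact_mod_cast h
  obtain ⟨j, _, hj⟩ := (Nat.dvd_prime_pow hp).1 h'
  exact ⟨j, by rw [hj]; push_cast; rfl⟩

theorem case3 {p : ℕ} (hp : p.Prime) (h : p % 8 = 3) : (64 * (p : ℤ) ^ 2 : ℤ) ∈ S16 := by
  have : Fact p.Prime := ⟨hp⟩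
  have hpz : Prime (p : ℤ) := Nat.prime_iff_prime_int.1 hp
  have hp3 : 3 ≤ p := by have := hp.two_le; omega
  obtain ⟨r, hr1, hr2⟩ : ∃ r : ℤ, (p : ℤ) ∣ r ^ 2 + 2 ∧ ¬ (p : ℤ) ^ 2 ∣ r ^ 2 + 2 := by
    obtain ⟨s, hs⟩ := (ZMod.exists_sq_eq_neg_two_iff (p := p) (by omega)).2 (Or.inr h)
    obtain ⟨r, rfl⟩ := ZMod.intCast_surjective s
    have hr : (p : ℤ) ∣ r ^ 2 + 2 := by
      rw [← ZMod.intCast_zmod_eq_zero_iff_dvd]; push_cast; linear_combination -hs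
    by_cases h2 : (p : ℤ) ^ 2 ∣ r ^ 2 + 2
    · refine ⟨r + p, ?_, ?_⟩
      · have : (r + p) ^ 2 + 2 = (r ^ 2 + 2) + p * (2 * r + p) := by ring
        rw [this]; exact dvd_add hr (Dvd.intro _ rfl)
      · intro h3
        have h4 := dvd_sub h3 h2
        have e : (r + p) ^ 2 + 2 - (r ^ 2 + 2) = p * (2 * r + p) := by ring
        rw [e, pow_two] at h4
        have h5 := (mul_dvd_mul_iff_left hpz.ne_zero).1 h4
        have h6 : (p : ℤ) ∣ 2 * r := (dvd_add_left (dvd_refl _)).1 h5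
        have h7 : (p : ℤ) ∣ 2 := by
          rcases hpz.dvd_or_dvd h6 with h | h
          · exact h
          · have : (p : ℤ) ∣ r ^ 2 := dvd_pow h two_ne_zero
            exact (dvd_add_right this).1 hr
        have := Int.le_of_dvd (by norm_num) h7
        omega
    · exact ⟨r, hr, h2⟩
  have hw : Z8.nm ⟨r, -1, 0, -1⟩ = (r ^ 2 + 2) ^ 2 := by simp only [Z8.nm, N8, fS, fT]; ring
  obtain ⟨c, c0, c1, c2, c3⟩ := Z8.principal p hp.pos ⟨r, -1, 0, -1⟩
    (by rw [hw]; exact dvd_pow hr1 two_ne_zero)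
  rw [hw] at c2
  obtain ⟨j, hj⟩ := prime_pow_nm hp c0 c1
  have hj3 : ¬ 3 ≤ j := by
    intro hh
    have h1 : (p : ℤ) ^ 3 ∣ (r ^ 2 + 2) ^ 2 := (pow_dvd_pow _ hh).trans (hj ▸ c2)
    obtain ⟨k, hk⟩ := hr1
    have h2 : (p : ℤ) ^ 2 * p ∣ (p : ℤ) ^ 2 * k ^ 2 := by
      rw [hk] at h1; convert h1 using 1 <;> ring
    have h3 := (mul_dvd_mul_iff_left (pow_ne_zero 2 hpz.ne_zero)).1 h2
    have h4 := hpz.dvd_of_dvd_pow h3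
    apply hr2
    rw [hk, pow_two]; exact mul_dvd_mul_left _ h4
  have hsq : ∀ {s t : ℤ}, (p : ℤ) ∣ s ^ 2 + t ^ 2 → ∃ x y, s = p * x ∧ t = p * y := by
    intro s t hst
    obtain ⟨⟨x, hx⟩, ⟨y, hy⟩⟩ := three_mod_four_dvd hp (by omega) hst
    exact ⟨x, y, hx, hy⟩
  have hj2 : j = 2 := by
    have : j ≠ 0 := by
      rintro rfl
      rw [hj, pow_zero] at c3
      have := Int.le_of_dvd (by norm_num) c3
      omega
    have : j ≠ 1 := by
      rintro rfl
      rw [pow_one] at hj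
      rw [Z8.nm_eq] at hj
      obtain ⟨x, y, hx, hy⟩ := hsq (s := c.S) (t := c.T) (by rw [hj])
      have h1 : (p : ℤ) * (p * (x ^ 2 + y ^ 2)) = p * 1 := by
        rw [hx, hy] at hj; linear_combination hj
      have h2 := mul_left_cancel₀ hpz.ne_zero h1
      have := Int.le_of_dvd (by norm_num) (Dvd.intro _ h2)
      omega
    omega
  rw [hj2] at hj
  have hp16 : (p : ℤ) ^ 2 % 16 = 9 := by
    obtain ⟨k, hk⟩ : ∃ k : ℤ, (p : ℤ) = 8 * k + 3 := ⟨p / 8, by omega⟩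
    have : (p : ℤ) ^ 2 = 16 * (4 * k ^ 2 + 3 * k) + 9 := by rw [hk]; ring
    omega
  refine famZ8 c _ hj (by omega) ?_
  intro s t hst
  obtain ⟨x, y, hx, hy⟩ := hsq (s := s) (t := t) (by rw [hst]; exact ⟨2 * p, by ring⟩)
  have hxy : x ^ 2 + y ^ 2 = 2 := by
    apply mul_left_cancel₀ (pow_ne_zero 2 hpz.ne_zero)
    rw [hx, hy] at hst; linear_combination hst
  have hx1 : x ^ 2 = 1 := by
    have a1 : x < 2 := by nlinarith [sq_nonneg y]
    have a2 : -2 < x := by nlinarith [sq_nonneg y]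
    have a3 : y < 2 := by nlinarith [sq_nonneg x]
    have a4 : -2 < y := by nlinarith [sq_nonneg x]
    interval_cases x <;> interval_cases y <;> omega
  rw [hx, mul_pow, hx1, mul_one]; exact hp16

theorem case1 {p : ℕ} (hp : p.Prime) (h : p % 8 = 1) {a b : ℤ} (hab : (p : ℤ) = a ^ 2 + b ^ 2)
    (hgood : a + b ≡ 3 [ZMOD 8] ∨ a + b ≡ 5 [ZMOD 8]) : (64 * (p : ℤ)) ∈ S16 := by
  have : Fact p.Prime := ⟨hp⟩
  have hpz : Prime (p : ℤ) := Nat.prime_iff_prime_int.1 hp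
  have hp3 : 3 ≤ p := by have := hp.two_le; omega
  obtain ⟨r, hr1, hr2⟩ : ∃ r : ℤ, (p : ℤ) ∣ r ^ 4 + 1 ∧ ¬ (p : ℤ) ^ 2 ∣ r ^ 4 + 1 := by
    obtain ⟨s, hs⟩ := (ZMod.exists_sq_eq_two_iff (p := p) (by omega)).2 (Or.inl h)
    obtain ⟨i, hi⟩ := (ZMod.exists_sq_eq_neg_one_iff (p := p)).2 (by omega)
    have h20 : (2 : ZMod p) ≠ 0 := by
      intro h2
      have : ((2 : ℕ) : ZMod p) = 0 := by exact_mod_cast h2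
      rw [ZMod.natCast_eq_zero_iff] at this
      have := Nat.le_of_dvd (by norm_num) this
      omega
    have hs0 : s ≠ 0 := by rintro rfl; apply h20; rw [hs]; simp
    obtain ⟨r, hrr⟩ := ZMod.intCast_surjective ((1 + i) / s)
    have hsq : ((r : ZMod p)) ^ 2 = i := by
      rw [hrr, div_pow, pow_two s, ← hs]
      rw [div_eq_iff h20]; linear_combination -hi
    have hr : (p : ℤ) ∣ r ^ 4 + 1 := by
      rw [← ZMod.intCast_zmod_eq_zero_iff_dvd]; push_cast
      have : (r : ZMod p) ^ 4 = (r ^ 2) ^ 2 := by ring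
      rw [this, hsq]; linear_combination -hi
    by_cases h2 : (p : ℤ) ^ 2 ∣ r ^ 4 + 1
    · refine ⟨r + p, ?_, ?_⟩
      · have : (r + p) ^ 4 + 1 = (r ^ 4 + 1) + p * (4 * r ^ 3 + p * (6 * r ^ 2 + 4 * r * p + p ^ 2)) := by ring
        rw [this]; exact dvd_add hr (Dvd.intro _ rfl)
      · intro h3
        have h4 := dvd_sub h3 h2
        have e : (r + p) ^ 4 + 1 - (r ^ 4 + 1) = p * (4 * r ^ 3 + p * (6 * r ^ 2 + 4 * r * p + p ^ 2)) := by ring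
        rw [e, pow_two] at h4
        have h5 := (mul_dvd_mul_iff_left hpz.ne_zero).1 h4
        have h6 : (p : ℤ) ∣ 4 * r ^ 3 := (dvd_add_left (Dvd.intro _ rfl)).1 h5
        rcases hpz.dvd_or_dvd h6 with h | h
        · have h7 : (p : ℤ) ∣ 2 := hpz.dvd_of_dvd_pow (n := 2) (by norm_num; exact h)
          have := Int.le_of_dvd (by norm_num) h7
          omega
        · have : (p : ℤ) ∣ r ^ 4 := dvd_pow (hpz.dvd_of_dvd_pow h) (by norm_num)
          have h8 := (dvd_add_right this).1 hr
          have := Int.le_of_dvd (by norm_num) h8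
          omega
    · exact ⟨r, hr, h2⟩
  have hw : Z8.nm ⟨r, -1, 0, 0⟩ = r ^ 4 + 1 := by simp only [Z8.nm, N8, fS, fT]; ring
  obtain ⟨c, c0, c1, c2, c3⟩ := Z8.principal p hp.pos ⟨r, -1, 0, 0⟩ (by rw [hw]; exact hr1)
  rw [hw] at c2
  obtain ⟨j, hj⟩ := prime_pow_nm hp c0 c1
  have hj2 : ¬ 2 ≤ j := fun hh => hr2 ((pow_dvd_pow _ hh).trans (hj ▸ c2))
  have hj0 : j ≠ 0 := by
    rintro rfl
    rw [hj, pow_zero] at c3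
    have := Int.le_of_dvd (by norm_num) c3
    omega
  have hj1 : j = 1 := by omega
  rw [hj1, pow_one] at hj
  refine famZ8 c _ hj (by omega) ?_
  have g1 : (a + b) ^ 2 % 16 = 9 := by
    rcases hgood with hg | hg <;> unfold Int.ModEq at hg
    · obtain ⟨k, hk⟩ : ∃ k : ℤ, a + b = 8 * k + 3 := ⟨(a + b) / 8, by omega⟩
      have : (a + b) ^ 2 = 16 * (4 * k ^ 2 + 3 * k) + 9 := by rw [hk]; ring
      omega
    · obtain ⟨k, hk⟩ : ∃ k : ℤ, a + b = 8 * k + 5 := ⟨(a + b) / 8, by omega⟩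
      have : (a + b) ^ 2 = 16 * (4 * k ^ 2 + 5 * k + 1) + 9 := by rw [hk]; ring
      omega
  have g2 : (a - b) ^ 2 % 16 = 9 := by
    have e1 : (a + b) ^ 2 = p + 2 * (a * b) := by rw [hab]; ring
    have e2 : (a - b) ^ 2 = p - 2 * (a * b) := by rw [hab]; ring
    omega
  intro s t hst
  have hs2 : (s + t) % 2 = 0 := by
    have := sq_par s
    have := sq_par t
    omega
  obtain ⟨u, hu⟩ : ∃ u, s + t = 2 * u := ⟨(s + t) / 2, by omega⟩
  have ht : t = 2 * u - s := by linarith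
  have huv : u ^ 2 + (s - u) ^ 2 = p := by
    rw [ht] at hst; linarith
  obtain ⟨x, y, hxy⟩ := gauss_div hp hab (u := u) (v := s - u) (by rw [huv])
  have hxy1 : x ^ 2 + y ^ 2 = 1 := by
    apply mul_left_cancel₀ hpz.ne_zero
    rcases hxy with ⟨e1, e2⟩ | ⟨e1, e2⟩ <;> rw [e2, e1] at huv <;>
      linear_combination (x ^ 2 + y ^ 2) * hab + huv
  have a1 : x < 2 := by nlinarith [sq_nonneg y]
  have a2 : -2 < x := by nlinarith [sq_nonneg y]
  have a3 : y < 2 := by nlinarith [sq_nonneg x]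
  have a4 : -2 < y := by nlinarith [sq_nonneg x]
  have hs : s ^ 2 = (a + b) ^ 2 ∨ s ^ 2 = (a - b) ^ 2 := by
    have fin : ∀ s : ℤ, (s = a + b ∨ s = -(a + b) ∨ s = a - b ∨ s = -(a - b)) →
        s ^ 2 = (a + b) ^ 2 ∨ s ^ 2 = (a - b) ^ 2 := by
      rintro s (h | h | h | h) <;> rw [h]
      · left; rfl
      · left; ring
      · right; rfl
      · right; ring
    apply fin
    interval_cases x <;> interval_cases y <;> omega
  rcases hs with hs | hs <;> rw [hs] <;> assumption

theorem of_64 {k : ℤ} (h : 64 * k ∈ S16) (m : ℤ) : 64 * k * m ∈ S16 := by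
  rcases Int.emod_two_eq_zero_or_one m with hm | hm
  · obtain ⟨l, hl⟩ : ∃ l, m = 2 * l := ⟨m / 2, by omega⟩
    have := mem128_S16 (k * l)
    convert this using 1
    rw [hl]; ring
  · exact mul_S16 h (odd_S16 hm)


theorem taussky_todd_S16 :
    S16 =
      {n : ℤ | Odd n} ∪ {n : ℤ | (128 : ℤ) ∣ n} ∪
      {n : ℤ | ∃ (p : ℕ) (m a b : ℤ), p.Prime ∧ p % 8 = 1 ∧ (p : ℤ) = a ^ 2 + b ^ 2 ∧
        (a + b ≡ 3 [ZMOD 8] ∨ a + b ≡ 5 [ZMOD 8]) ∧ n = 64 * p * m} ∪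
      {n : ℤ | ∃ (p : ℕ) (m : ℤ), p.Prime ∧ p % 8 = 5 ∧ n = 64 * p * m} ∪
      {n : ℤ | ∃ (p : ℕ) (m : ℤ), p.Prime ∧ p % 8 = 3 ∧ n = 64 * (p : ℤ) ^ 2 * m} := by
  ext n
  simp only [Set.mem_union, Set.mem_setOf_eq]
  constructor
  · rintro ⟨a, ha⟩
    rw [det_formula] at ha
    have := necessity (a 0 + a 8) (a 1 + a 9) (a 2 + a 10) (a 3 + a 11) (a 4 + a 12) (a 5 + a 13)
      (a 6 + a 14) (a 7 + a 15) (a 0 - a 8) (a 1 - a 9) (a 2 - a 10) (a 3 - a 11) (a 4 - a 12)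
      (a 5 - a 13) (a 6 - a 14) (a 7 - a 15) (by omega) (by omega) (by omega) (by omega) (by omega)
      (by omega) (by omega) (by omega) n ha
    rcases this with h | h | ⟨k, hk, ⟨p, x, y, h1, h2, h3, h4, ⟨m, hm⟩⟩ | ⟨p, h1, h2, ⟨m, hm⟩⟩ |
      ⟨p, h1, h2, ⟨m, hm⟩⟩⟩
    · exact Or.inl (Or.inl (Or.inl (Or.inl (Int.odd_iff.2 h))))
    · exact Or.inl (Or.inl (Or.inl (Or.inr h)))
    · exact Or.inl (Or.inl (Or.inr ⟨p, m, x, y, h1, h2, h3, h4, by rw [hk, hm]; ring⟩))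
    · exact Or.inl (Or.inr ⟨p, m, h1, h2, by rw [hk, hm]; ring⟩)
    · exact Or.inr ⟨p, m, h1, h2, by rw [hk, hm]; ring⟩
  · rintro ((((h | ⟨m, rfl⟩) | ⟨p, m, x, y, h1, h2, h3, h4, rfl⟩) | ⟨p, m, h1, h2, rfl⟩) |
      ⟨p, m, h1, h2, rfl⟩)
    · exact odd_S16 (Int.odd_iff.1 h)
    · exact mem128_S16 m
    · exact of_64 (case1 h1 h2 h3 h4) m
    · exact of_64 (case5 h1 h2) m
    · exact of_64 (case3 h1 h2) m
end

section
/- For integers a_0, …, a_15, the complex number α_1 := f(ζ_16) f(ζ_16^5) f(ζ_16^9) f(ζ_16^13) has real and imaginary parts given by the following integer polynomial identities in e_0, …, e_7: Re(α_1) = e_0⁴ + e_4⁴ − e_2⁴ − e_6⁴ − 6e_0²e_4² + 6e_2²e_6² − 2(e_1² − e_5²)(e_3² − e_7²) + 4(e_2e_6 + e_1e_7 + e_3e_5)(e_0² − e_4²) − 4(e_0e_6 + e_2e_4 − e_1e_5)(e_1² − e_5²) + 4(e_0e_4 + e_1e_3 − e_5e_7)(e_2² − e_6²) − 4(e_0e_2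 − e_4e_6 + e_3e_7)(e_3² − e_7²) − 8e_0e_2e_1e_5 + 8e_0e_4e_1e_3 − 8e_0e_4e_5e_7 + 8e_0e_6e_3e_7 + 8e_2e_4e_3e_7 − 8e_2e_6e_1e_7 − 8e_2e_6e_3e_5 + 8e_4e_6e_1e_5 + 8e_1e_3e_5e_7, and Im(α_1) = e_3⁴ + e_7⁴ − e_1⁴ − e_5⁴ − 6e_3²e_7² + 6e_1²e_5² − 2(e_0² − e_4²)(e_2² − e_6²) + 4(e_0e_4 − e_1e_3 + e_5e_7)(e_0² − e_4²) + 4(e_0e_2 − e_4e_6 − e_3e_7)(e_1² − e_5²) − 4(e_2e_6 − e_1e_7 − e_3e_5)(e_2² − e_6²) − 4(e_0e_6 + e_2e_4 + e_1e_5)(e_3² − e_7²) + 8e_0e_2e_4e_6 − 8e_0e_2e_3e_7 + 8e_0e_4e_1e_7 + 8e_0e_4e_3e_5 − 8e_0e_6e_1e_5 − 8e_2e_4e_1e_5 + 8e_2e_6e_1e_3 − 8e_2e_6e_5e_7 + 8e_4e_6e_3e_7. In particular, α_1 ∈ ℤ[i]. -/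
open Complex Finset

def alpha1ReInt (a : Fin 16 → ℤ) : ℤ :=
  let e := ecoef a
  e 0 ^ 4 + e 4 ^ 4 - e 2 ^ 4 - e 6 ^ 4 - 6 * e 0 ^ 2 * e 4 ^ 2 + 6 * e 2 ^ 2 * e 6 ^ 2
    - 2 * (e 1 ^ 2 - e 5 ^ 2) * (e 3 ^ 2 - e 7 ^ 2)
    + 4 * (e 2 * e 6 + e 1 * e 7 + e 3 * e 5) * (e 0 ^ 2 - e 4 ^ 2)
    - 4 * (e 0 * e 6 + e 2 * e 4 - e 1 * e 5) * (e 1 ^ 2 - e 5 ^ 2)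
    + 4 * (e 0 * e 4 + e 1 * e 3 - e 5 * e 7) * (e 2 ^ 2 - e 6 ^ 2)
    - 4 * (e 0 * e 2 - e 4 * e 6 + e 3 * e 7) * (e 3 ^ 2 - e 7 ^ 2)
    - 8 * e 0 * e 2 * e 1 * e 5 + 8 * e 0 * e 4 * e 1 * e 3 - 8 * e 0 * e 4 * e 5 * e 7
    + 8 * e 0 * e 6 * e 3 * e 7 + 8 * e 2 * e 4 * e 3 * e 7 - 8 * e 2 * e 6 * e 1 * e 7
    - 8 * e 2 * e 6 * e 3 * e 5 + 8 * e 4 * e 6 * e 1 * e 5 + 8 * e 1 * e 3 * e 5 * e 7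

def alpha1ImInt (a : Fin 16 → ℤ) : ℤ :=
  let e := ecoef a
  e 3 ^ 4 + e 7 ^ 4 - e 1 ^ 4 - e 5 ^ 4 - 6 * e 3 ^ 2 * e 7 ^ 2 + 6 * e 1 ^ 2 * e 5 ^ 2
    - 2 * (e 0 ^ 2 - e 4 ^ 2) * (e 2 ^ 2 - e 6 ^ 2)
    + 4 * (e 0 * e 4 - e 1 * e 3 + e 5 * e 7) * (e 0 ^ 2 - e 4 ^ 2)
    + 4 * (e 0 * e 2 - e 4 * e 6 - e 3 * e 7) * (e 1 ^ 2 - e 5 ^ 2)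
    - 4 * (e 2 * e 6 - e 1 * e 7 - e 3 * e 5) * (e 2 ^ 2 - e 6 ^ 2)
    - 4 * (e 0 * e 6 + e 2 * e 4 + e 1 * e 5) * (e 3 ^ 2 - e 7 ^ 2)
    + 8 * e 0 * e 2 * e 4 * e 6 - 8 * e 0 * e 2 * e 3 * e 7 + 8 * e 0 * e 4 * e 1 * e 7
    + 8 * e 0 * e 4 * e 3 * e 5 - 8 * e 0 * e 6 * e 1 * e 5 - 8 * e 2 * e 4 * e 1 * e 5
    + 8 * e 2 * e 6 * e 1 * e 3 - 8 * e 2 * e 6 * e 5 * e 7 + 8 * e 4 * e 6 * e 3 * e 7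

theorem zeta16_pow_four : zeta16 ^ 4 = Complex.I := by
  unfold zeta16
  rw [← Complex.exp_nat_mul]
  rw [show ((4 : ℕ) : ℂ) * (2 * Real.pi * Complex.I / 16) = Real.pi / 2 * Complex.I by
    push_cast; ring]
  exact Complex.exp_pi_div_two_mul_I

theorem fpoly_eq (a : Fin 16 → ℤ) (x : ℂ) (hx : x ^ 4 = Complex.I) :
    fpoly a x = ((ecoef a 0 : ℂ) + ecoef a 4 * Complex.I)
      + ((ecoef a 1 : ℂ) + ecoef a 5 * Complex.I) * x
      + ((ecoef a 2 : ℂ) + ecoef a 6 * Complex.I) * x ^ 2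
      + ((ecoef a 3 : ℂ) + ecoef a 7 * Complex.I) * x ^ 3 := by
  have h8 : x ^ 8 = -1 := by
    rw [show x ^ 8 = (x ^ 4) ^ 2 by ring, hx, Complex.I_sq]
  have e0 : ecoef a 0 = a 0 - a 8 := rfl
  have e1 : ecoef a 1 = a 1 - a 9 := rfl
  have e2 : ecoef a 2 = a 2 - a 10 := rfl
  have e3 : ecoef a 3 = a 3 - a 11 := rfl
  have e4 : ecoef a 4 = a 4 - a 12 := rfl
  have e5 : ecoef a 5 = a 5 - a 13 := rfl
  have e6 : ecoef a 6 = a 6 - a 14 := rfl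
  have e7 : ecoef a 7 = a 7 - a 15 := rfl
  have hs : fpoly a x = a 0 + a 1 * x + a 2 * x ^ 2 + a 3 * x ^ 3 + a 4 * x ^ 4 + a 5 * x ^ 5
      + a 6 * x ^ 6 + a 7 * x ^ 7 + a 8 * x ^ 8 + a 9 * x ^ 9 + a 10 * x ^ 10 + a 11 * x ^ 11
      + a 12 * x ^ 12 + a 13 * x ^ 13 + a 14 * x ^ 14 + a 15 * x ^ 15 := by
    simp [fpoly, Fin.sum_univ_succ]
    ring_nf
  rw [hs, e0, e1, e2, e3, e4, e5, e6, e7, ← hx]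
  push_cast
  linear_combination (a 8 + a 9 * x + a 10 * x ^ 2 + a 11 * x ^ 3 + a 12 * x ^ 4
    + a 13 * x ^ 5 + a 14 * x ^ 6 + a 15 * x ^ 7 : ℂ) * h8

theorem prod_four (A B C D z : ℂ) (hz : z ^ 4 = Complex.I) :
    (A + B * z + C * z ^ 2 + D * z ^ 3)
      * (A + B * (Complex.I * z) + C * (Complex.I * z) ^ 2 + D * (Complex.I * z) ^ 3)
      * (A + B * (-z) + C * (-z) ^ 2 + D * (-z) ^ 3)
      * (A + B * (-(Complex.I * z)) + C * (-(Complex.I * z)) ^ 2 + D * (-(Complex.I * z)) ^ 3)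
    = (A ^ 2 + Complex.I * C ^ 2 - 2 * Complex.I * (B * D)) ^ 2
      - Complex.I * (2 * (A * C) - B ^ 2 - Complex.I * D ^ 2) ^ 2 := by
  have hI : Complex.I ^ 2 = -1 := Complex.I_sq
  have h1 : (A + B * z + C * z ^ 2 + D * z ^ 3) * (A + B * (-z) + C * (-z) ^ 2 + D * (-z) ^ 3)
      = (A ^ 2 + Complex.I * C ^ 2 - 2 * Complex.I * (B * D))
        + (2 * (A * C) - B ^ 2 - Complex.I * D ^ 2) * z ^ 2 := by
    linear_combination (C ^ 2 - 2 * B * D - D ^ 2 * z ^ 2) * hz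
  have hy2 : (Complex.I * z) ^ 2 = - z ^ 2 := by rw [mul_pow, hI]; ring
  have hy : (Complex.I * z) ^ 4 = Complex.I := by
    linear_combination ((Complex.I * z) ^ 2 - z ^ 2) * hy2 + hz
  generalize Complex.I * z = y at hy hy2 ⊢
  have h2 : (A + B * y + C * y ^ 2 + D * y ^ 3) * (A + B * (-y) + C * (-y) ^ 2 + D * (-y) ^ 3)
      = (A ^ 2 + Complex.I * C ^ 2 - 2 * Complex.I * (B * D))
        - (2 * (A * C) - B ^ 2 - Complex.I * D ^ 2) * z ^ 2 := by
    linear_combination (C ^ 2 - 2 * B * D - D ^ 2 * y ^ 2) * hy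
      + (2 * (A * C) - B ^ 2 - Complex.I * D ^ 2) * hy2
  generalize hP : A ^ 2 + Complex.I * C ^ 2 - 2 * Complex.I * (B * D) = P at *
  generalize hQ : 2 * (A * C) - B ^ 2 - Complex.I * D ^ 2 = Q at *
  rw [show ∀ p q r s : ℂ, p * q * r * s = (p * r) * (q * s) by intros; ring, h1, h2]
  linear_combination (- Q ^ 2) * hz

theorem alpha1_eq (a : Fin 16 → ℤ) :
    fpoly a zeta16 * fpoly a (zeta16 ^ 5) * fpoly a (zeta16 ^ 9) * fpoly a (zeta16 ^ 13)
      = ((alpha1ReInt a : ℝ) : ℂ) + ((alpha1ImInt a : ℝ) : ℂ) * Complex.I := by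
  have hz := zeta16_pow_four
  have hI : Complex.I ^ 2 = -1 := Complex.I_sq
  have z5 : zeta16 ^ 5 = Complex.I * zeta16 := by rw [← hz]; ring
  have z9 : zeta16 ^ 9 = -zeta16 := by
    rw [show zeta16 ^ 9 = (zeta16 ^ 4) ^ 2 * zeta16 by ring, hz, hI]; ring
  have z13 : zeta16 ^ 13 = -(Complex.I * zeta16) := by
    rw [show zeta16 ^ 13 = (zeta16 ^ 4) ^ 2 * (zeta16 ^ 4 * zeta16) by ring, hz, hI]; ring
  have hI4 : Complex.I ^ 4 = 1 := Complex.I_pow_four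
  have q5 : (Complex.I * zeta16) ^ 4 = Complex.I := by rw [mul_pow, hI4, hz, one_mul]
  have q9 : (-zeta16) ^ 4 = Complex.I := by rw [Even.neg_pow (by decide), hz]
  have q13 : (-(Complex.I * zeta16)) ^ 4 = Complex.I := by rw [Even.neg_pow (by decide), q5]
  rw [z5, z9, z13, fpoly_eq a _ hz, fpoly_eq a _ q5, fpoly_eq a _ q9, fpoly_eq a _ q13,
    prod_four _ _ _ _ _ hz]
  simp only [alpha1ReInt, alpha1ImInt]
  apply Complex.ext
  · simp [pow_succ]
    ring
  · simp [pow_succ]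
    ring

theorem alpha1_re_im (a : Fin 16 → ℤ) :
    (fpoly a zeta16 * fpoly a (zeta16 ^ 5) * fpoly a (zeta16 ^ 9) * fpoly a (zeta16 ^ 13)).re
        = (alpha1ReInt a : ℝ) ∧
    (fpoly a zeta16 * fpoly a (zeta16 ^ 5) * fpoly a (zeta16 ^ 9) * fpoly a (zeta16 ^ 13)).im
        = (alpha1ImInt a : ℝ) := by
  rw [alpha1_eq]
  constructor <;> simp
end

section
/- For integers a_0, …, a_15, any prime p with p ≡ 3 (mod 4), any d ∈ {1, 2, 4}, and any integer k ≥ 1: if p^{2k−1} divides N_d, then p^{2k} divides N_d. -/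
open Complex Finset

lemma aux_split (P : Polynomial ℤ) : ∃ E O : Polynomial ℤ, ∀ x : ℂ,
    Polynomial.aeval x P = Polynomial.aeval (x ^ 2) E + x * Polynomial.aeval (x ^ 2) O := by
  induction P using Polynomial.induction_on with
  | C a => exact ⟨Polynomial.C a, 0, fun x => by simp⟩
  | add p q hp hq =>
    obtain ⟨E, O, h⟩ := hp
    obtain ⟨E', O', h'⟩ := hq
    exact ⟨E + E', O + O', fun x => by simp only [map_add, h, h']; ring⟩
  | monomial n a h =>
    obtain ⟨E, O, h⟩ := h
    refine ⟨Polynomial.X * O, E, fun x => ?_⟩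
    rw [pow_succ, ← mul_assoc, map_mul, h]
    simp only [map_mul, Polynomial.aeval_X]
    ring

lemma aux_even (P : Polynomial ℤ) : ∃ Q : Polynomial ℤ, ∀ x : ℂ,
    Polynomial.aeval x P * Polynomial.aeval (-x) P = Polynomial.aeval (x ^ 2) Q := by
  obtain ⟨E, O, h⟩ := aux_split P
  refine ⟨E ^ 2 - Polynomial.X * O ^ 2, fun x => ?_⟩
  rw [h, h]
  simp only [map_mul, Polynomial.aeval_X, map_sub, map_pow, neg_sq]
  ring

lemma aux_I (P : Polynomial ℤ) : ∃ A B : ℤ,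
    Polynomial.aeval I P = (A : ℂ) + B * I ∧ Polynomial.aeval (-I) P = (A : ℂ) - B * I := by
  obtain ⟨E, O, h⟩ := aux_split P
  refine ⟨E.eval (-1), O.eval (-1), ?_⟩
  have key : ∀ Q : Polynomial ℤ, Polynomial.aeval (-1 : ℂ) Q = ((Q.eval (-1) : ℤ) : ℂ) := by
    intro Q
    have := Polynomial.aeval_algebraMap_apply ℂ (-1 : ℤ) Q
    simpa using this
  rw [h, h, neg_sq, I_sq, key, key]
  constructor <;> ring

lemma aux_norm (P : Polynomial ℤ) : ∃ A B : ℤ,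
    Polynomial.aeval I P * Polynomial.aeval (-I) P = ((A ^ 2 + B ^ 2 : ℤ) : ℂ) := by
  obtain ⟨A, B, h, h'⟩ := aux_I P
  refine ⟨A, B, ?_⟩
  rw [h, h']
  push_cast
  linear_combination (-(B : ℂ) ^ 2) * I_sq

lemma aux_arith (A B : ℤ) (p : ℕ) (hp : p.Prime) (hp3 : p % 4 = 3) (k : ℕ) (hk : 1 ≤ k)
    (h : (p : ℤ) ^ (2 * k - 1) ∣ A ^ 2 + B ^ 2) : (p : ℤ) ^ (2 * k) ∣ A ^ 2 + B ^ 2 := by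
  have := Fact.mk hp
  have e : A ^ 2 + B ^ 2 = ((A.natAbs ^ 2 + B.natAbs ^ 2 : ℕ) : ℤ) := by
    push_cast
    simp
  rw [e] at h ⊢
  generalize hn : A.natAbs ^ 2 + B.natAbs ^ 2 = n at h ⊢
  have h1 : p ^ (2 * k - 1) ∣ n := by exact_mod_cast h
  suffices p ^ (2 * k) ∣ n by exact_mod_cast this
  by_cases h0 : n = 0
  · simp [h0]
  rw [padicValNat_dvd_iff_le h0] at h1 ⊢
  have hpn : p ∈ n.primeFactors := by
    rw [Nat.mem_primeFactors]
    refine ⟨hp, ?_, h0⟩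
    rw [← pow_one p, padicValNat_dvd_iff_le h0]
    omega
  have := Nat.eq_sq_add_sq_iff.mp ⟨_, _, hn.symm⟩ p hpn hp3
  obtain ⟨m, hm⟩ := this
  omega

noncomputable def auxPoly (a : Fin 16 → ℤ) : Polynomial ℤ :=
  ∑ k : Fin 16, Polynomial.C (a k) * Polynomial.X ^ (k : ℕ)

lemma aux_fpoly (a : Fin 16 → ℤ) (x : ℂ) : fpoly a x = Polynomial.aeval x (auxPoly a) := by
  simp [fpoly, auxPoly, map_sum]

lemma aux_z4 : zeta16 ^ 4 = I := by
  rw [zeta16, ← Complex.exp_nat_mul]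
  refine Eq.trans ?_ Complex.exp_pi_div_two_mul_I
  congr 1
  push_cast
  ring

lemma aux_main (a : Fin 16 → ℤ) (d : ℕ) (hd : d ∈ ({1, 2, 4} : Set ℕ)) :
    ∃ A B : ℤ, Nprod a d = ((A ^ 2 + B ^ 2 : ℤ) : ℂ) := by
  obtain ⟨G, hG⟩ := aux_even (auxPoly a)
  obtain ⟨H, hH⟩ := aux_even G
  have z4 := aux_z4
  have hI := I_sq
  simp only [Set.mem_insert_iff, Set.mem_singleton_iff] at hd
  rcases hd with rfl | rfl | rfl
  · obtain ⟨A, B, h⟩ := aux_norm H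
    refine ⟨A, B, ?_⟩
    rw [← h]
    have s : Finset.filter (fun l => Nat.gcd l 16 = 1) (Finset.range 16)
      = {1, 3, 5, 7, 9, 11, 13, 15} := by decide
    rw [Nprod, s]
    simp only [aux_fpoly]
    set z := zeta16
    have e5 : z ^ 5 = I * z := by rw [← z4]; ring
    have e7 : z ^ 7 = I * z ^ 3 := by rw [← z4]; ring
    have e9 : z ^ 9 = - z := by linear_combination (z ^ 5 + I * z) * z4 + z * hI
    have e11 : z ^ 11 = - z ^ 3 := by linear_combination z ^ 2 * e9
    have e13 : z ^ 13 = - (I * z) := by linear_combination z ^ 4 * e9 - z * z4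
    have e15 : z ^ 15 = - (I * z ^ 3) := by linear_combination z ^ 6 * e9 - z ^ 3 * z4
    have q1 := hG z
    have q2 := hG (I * z)
    have q3 := hG (z ^ 3)
    have q4 := hG (I * z ^ 3)
    have r1 := hH (z ^ 2)
    have r3 := hH ((z ^ 3) ^ 2)
    rw [show (I * z) ^ 2 = - z ^ 2 by rw [mul_pow, hI]; ring] at q2
    rw [show (I * z ^ 3) ^ 2 = - (z ^ 3) ^ 2 by rw [mul_pow, hI]; ring] at q4
    rw [show (z ^ 2) ^ 2 = I by rw [← z4]; ring] at r1
    rw [show ((z ^ 3) ^ 2) ^ 2 = - I by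
      linear_combination z ^ 3 * e9 + (-1 : ℂ) * z4] at r3
    rw [← r1, ← r3, ← q1, ← q2, ← q3, ← q4]
    simp [e5, e7, e9, e11, e13, e15]
    ring
  · obtain ⟨A, B, h⟩ := aux_norm G
    refine ⟨A, B, ?_⟩
    rw [← h]
    have s : Finset.filter (fun l => Nat.gcd l 16 = 2) (Finset.range 16)
      = {2, 6, 10, 14} := by decide
    rw [Nprod, s]
    simp only [aux_fpoly]
    set z := zeta16
    have e10 : z ^ 10 = - z ^ 2 := by
      linear_combination (z ^ 6 + I * z ^ 2) * z4 + z ^ 2 * hI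
    have e14 : z ^ 14 = - z ^ 6 := by linear_combination z ^ 4 * e10
    have q1 := hG (z ^ 2)
    have q3 := hG (z ^ 6)
    rw [show (z ^ 2) ^ 2 = I by rw [← z4]; ring] at q1
    rw [show (z ^ 6) ^ 2 = - I by
      linear_combination z ^ 2 * e10 + (-1 : ℂ) * z4] at q3
    rw [← q1, ← q3]
    simp [e10, e14]
    ring
  · obtain ⟨A, B, h⟩ := aux_norm (auxPoly a)
    refine ⟨A, B, ?_⟩
    rw [← h]
    have s : Finset.filter (fun l => Nat.gcd l 16 = 4) (Finset.range 16)
      = {4, 12} := by decide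
    rw [Nprod, s]
    simp only [aux_fpoly]
    set z := zeta16
    have e12 : z ^ 12 = - I := by
      linear_combination (z ^ 8 + I * z ^ 4 + I ^ 2) * z4 + I * hI
    simp [z4, e12]

theorem prime_sq_dvd_Nd (a : Fin 16 → ℤ) (p : ℕ) (hp : p.Prime) (hp3 : p % 4 = 3)
    (d : ℕ) (hd : d ∈ ({1, 2, 4} : Set ℕ)) (N : ℤ) (hN : (N : ℂ) = Nprod a d)
    (k : ℕ) (hk : 1 ≤ k) (hdvd : (p : ℤ) ^ (2 * k - 1) ∣ N) :
    (p : ℤ) ^ (2 * k) ∣ N := by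
  obtain ⟨A, B, h⟩ := aux_main a d hd
  rw [h] at hN
  have hN' : N = A ^ 2 + B ^ 2 := by exact_mod_cast hN
  subst hN'
  exact aux_arith A B p hp hp3 k hk hdvd
end

section
/- For integers a_0, …, a_15, the integers N_1, N_2, N_4, N_8 and N_16 are all congruent to one another modulo 2. -/
open Complex Finset

/-- There is a ring hom from the algebraic integers in `ℂ` to a field of characteristic two. -/
theorem exists_reduction : ∃ M : Ideal (integralClosure ℤ ℂ), M.IsMaximal ∧
    (2 : integralClosure ℤ ℂ) ∈ M := by
  have h : ¬ IsUnit (2 : integralClosure ℤ ℂ) := by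
    intro hu
    obtain ⟨u, hu⟩ := hu.exists_right_inv
    have h1 : (2 : ℂ) * (u : ℂ) = 1 := by
      have := congrArg (fun x : integralClosure ℤ ℂ => (x : ℂ)) hu
      exact this
    have hint : IsIntegral ℤ (u : ℂ) := u.2
    have he : (u : ℂ) = algebraMap ℚ ℂ (1 / 2) := by
      have : (u : ℂ) = 1 / 2 := by linear_combination h1 / 2
      rw [this]; norm_num
    rw [he, isIntegral_algebraMap_iff (algebraMap ℚ ℂ).injective] at hint
    obtain ⟨n, hn⟩ := IsIntegrallyClosed.isIntegral_iff.mp hint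
    have h2 : ((2 * n : ℤ) : ℚ) = ((1 : ℤ) : ℚ) := by
      have hn' : (n : ℚ) = 1 / 2 := by simpa using hn
      push_cast
      rw [hn']; norm_num
    have h3 : 2 * n = 1 := by exact_mod_cast h2
    omega
  obtain ⟨M, hM, h2⟩ := exists_max_ideal_of_mem_nonunits (mem_nonunits_iff.mpr h)
  exact ⟨M, hM, h2⟩

theorem zeta16_pow : zeta16 ^ 16 = 1 := by
  unfold zeta16
  rw [← Complex.exp_nat_mul, ← Complex.exp_two_pi_mul_I]
  congr 1
  push_cast
  ring

theorem Nd_congr_sum (a : Fin 16 → ℤ) (d l0 : ℕ) (hl0 : l0 < 16) (hd : Nat.gcd l0 16 = d) (N : ℤ)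
    (h : (N : ℂ) = Nprod a d) : N ≡ ∑ k, a k [ZMOD 2] := by
  obtain ⟨M, hM, h2⟩ := exists_reduction
  letI : Field (integralClosure ℤ ℂ ⧸ M) := Ideal.Quotient.field M
  let φ : integralClosure ℤ ℂ →+* (integralClosure ℤ ℂ ⧸ M) := Ideal.Quotient.mk M
  have h20 : (2 : integralClosure ℤ ℂ ⧸ M) = 0 := by
    have : φ 2 = 0 := Ideal.Quotient.eq_zero_iff_mem.mpr h2
    exact (map_ofNat φ 2).symm.trans this
  haveI : CharP (integralClosure ℤ ℂ ⧸ M) 2 := CharTwo.of_one_ne_zero_of_two_eq_zero one_ne_zero h20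
  have hz : IsIntegral ℤ zeta16 := by
    refine IsIntegral.of_pow (n := 16) (by norm_num) ?_
    rw [zeta16_pow]; exact isIntegral_one
  let z : integralClosure ℤ ℂ := ⟨zeta16, hz⟩
  have hz16 : z ^ 16 = 1 := Subtype.ext (by simpa [z] using zeta16_pow)
  have hφz : φ z = 1 := by
    have h1 : (φ z) ^ 16 = 1 := by rw [← map_pow, hz16, map_one]
    have h3 : (φ z - 1) ^ (2 ^ 4) = 0 := by
      rw [sub_pow_char_pow (p := 2)]
      norm_num [h1]
    exact sub_eq_zero.mp (pow_eq_zero_iff (by norm_num) |>.mp h3)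
  have hN : (N : integralClosure ℤ ℂ) =
      ∏ l ∈ Finset.filter (fun l => Nat.gcd l 16 = d) (Finset.range 16),
        ∑ k : Fin 16, (a k : integralClosure ℤ ℂ) * (z ^ l) ^ (k : ℕ) := by
    apply Subtype.ext
    simpa [Nprod, fpoly, z] using h
  have hN2 := congrArg φ hN
  simp only [map_prod, map_sum, map_mul, map_pow, hφz, one_pow, mul_one, map_intCast,
    Finset.prod_const] at hN2
  have hc : (Finset.filter (fun l => Nat.gcd l 16 = d) (Finset.range 16)).card ≠ 0 := by
    apply Finset.card_ne_zero_of_mem (a := l0)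
    simp [hl0, hd]
  have key : ((N - (∑ k, a k) ^
      (Finset.filter (fun l => Nat.gcd l 16 = d) (Finset.range 16)).card : ℤ) :
      integralClosure ℤ ℂ ⧸ M) = 0 := by
    push_cast
    rw [hN2, sub_self]
  rw [CharP.intCast_eq_zero_iff _ 2] at key
  have h5 : Even (N - (∑ k, a k) ^
      (Finset.filter (fun l => Nat.gcd l 16 = d) (Finset.range 16)).card) :=
    even_iff_two_dvd.mpr (by exact_mod_cast key)
  rw [Int.even_sub, Int.even_pow' hc, ← Int.even_sub] at h5
  exact (Int.modEq_iff_dvd.mpr (even_iff_two_dvd.mp h5)).symm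

theorem Nd_congruent_mod_two (a : Fin 16 → ℤ)
    (N1 N2 N4 N8 N16 : ℤ)
    (h1 : (N1 : ℂ) = Nprod a 1) (h2 : (N2 : ℂ) = Nprod a 2) (h4 : (N4 : ℂ) = Nprod a 4)
    (h8 : (N8 : ℂ) = Nprod a 8) (h16 : (N16 : ℂ) = Nprod a 16) :
    N1 ≡ N2 [ZMOD 2] ∧ N2 ≡ N4 [ZMOD 2] ∧ N4 ≡ N8 [ZMOD 2] ∧ N8 ≡ N16 [ZMOD 2] := by
  have e1 := Nd_congr_sum a 1 1 (by norm_num) (by norm_num) N1 h1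
  have e2 := Nd_congr_sum a 2 2 (by norm_num) (by norm_num) N2 h2
  have e4 := Nd_congr_sum a 4 4 (by norm_num) (by norm_num) N4 h4
  have e8 := Nd_congr_sum a 8 8 (by norm_num) (by norm_num) N8 h8
  have e16 := Nd_congr_sum a 16 0 (by norm_num) (by norm_num) N16 h16
  exact ⟨e1.trans e2.symm, e2.trans e4.symm, e4.trans e8.symm, e8.trans e16.symm⟩
end
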